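/- arXiv:1903.08337 — 2 statements merged into one kernel-verified Lean document; each statement's English description precedes it below -/
import Mathlib

section
/- Every IC-planar graph G satisfies δ(G) ≤ 6; if additionally the girth of G is at least 4 then δ(G) ≤ 4; and if the girth is at least 5 then δ(G) ≤ 3. -/
open Set

/-- A drawing of a simple graph in the plane in which every edge is crossed at most once
and the clusters (four end-vertices) of distinct crossings are disjoint: an IC-plane drawing. -/
structure ICDrawing {V : Type*} (G : SimpleGraph V) where
  /-- position of each vertex -/
  pos : V → ℝ × ℝ
  pos_inj : Function.Injective pos
  /-- parametrized arc of each edge -/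
  arc : V → V → ℝ → ℝ × ℝ
  arc_symm : ∀ u v t, arc u v t = arc v u (1 - t)
  arc_cont : ∀ u v, G.Adj u v → ContinuousOn (arc u v) (Icc 0 1)
  arc_inj : ∀ u v, G.Adj u v → InjOn (arc u v) (Icc 0 1)
  arc_start : ∀ u v, G.Adj u v → arc u v 0 = pos u
  /-- the interior of an arc passes through no vertex -/
  arc_avoid : ∀ u v, G.Adj u v → ∀ t ∈ Ioo (0:ℝ) 1, ∀ w, arc u v t ≠ pos w
  /-- the interiors of two distinct edges meet in at most one point -/
  cross_subsingleton : ∀ u v x y, G.Adj u v → G.Adj x y → s(u, v) ≠ s(x, y) →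
    (arc u v '' Ioo 0 1 ∩ arc x y '' Ioo 0 1).Subsingleton
  /-- each edge is crossed by at most one other edge -/
  cross_unique : ∀ u v x y x' y', G.Adj u v → G.Adj x y → G.Adj x' y' →
    s(u, v) ≠ s(x, y) → s(u, v) ≠ s(x', y') →
    (arc u v '' Ioo 0 1 ∩ arc x y '' Ioo 0 1).Nonempty →
    (arc u v '' Ioo 0 1 ∩ arc x' y' '' Ioo 0 1).Nonempty →
    s(x, y) = s(x', y')
  /-- clusters of distinct crossings are disjoint -/
  ic : ∀ u v x y u' v' x' y', G.Adj u v → G.Adj x y → G.Adj u' v' → G.Adj x' y' →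
    s(u, v) ≠ s(x, y) → s(u', v') ≠ s(x', y') →
    (arc u v '' Ioo 0 1 ∩ arc x y '' Ioo 0 1).Nonempty →
    (arc u' v' '' Ioo 0 1 ∩ arc x' y' '' Ioo 0 1).Nonempty →
    ({s(u, v), s(x, y)} : Set (Sym2 V)) ≠ {s(u', v'), s(x', y')} →
    ({u, v, x, y} : Set V) ∩ {u', v', x', y'} = ∅

/-- A graph is IC-planar if it admits an IC-plane drawing. -/
def SimpleGraph.ICPlanar {V : Type*} (G : SimpleGraph V) : Prop :=
  Nonempty (ICDrawing G)


namespace ICP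

/-- mod 2 boundary map -/
noncomputable def bd (α : Type*) : (Sym2 α →₀ ZMod 2) →ₗ[ZMod 2] (α →₀ ZMod 2) :=
  Finsupp.linearCombination (ZMod 2) (Sym2.lift
    ⟨fun x y => Finsupp.single x (1 : ZMod 2) + Finsupp.single y 1, fun _ _ => add_comm _ _⟩)

lemma bd_single {α : Type*} (x y : α) :
    bd α (Finsupp.single s(x, y) 1) = Finsupp.single x 1 + Finsupp.single y 1 := by
  simp [bd]

lemma add_self2 {M : Type*} [AddCommGroup M] [Module (ZMod 2) M] (x : M) : x + x = 0 := by
  have : ((1 : ZMod 2) + 1) • x = 0 := by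
    rw [show (1 : ZMod 2) + 1 = 0 by decide, zero_smul]
  simpa [add_smul] using this

lemma zmod2_ne {a : ZMod 2} (h : a ≠ 0) : a = 1 := by
  revert h; revert a; decide

/-- linear maps into a submodule, checked on generators -/
lemma lin_mem {E M : Type*} [AddCommGroup M] [Module (ZMod 2) M]
    (L : (E →₀ ZMod 2) →ₗ[ZMod 2] M) (S : Submodule (ZMod 2) M) (z : E →₀ ZMod 2)
    (h : ∀ e, z e ≠ 0 → L (Finsupp.single e 1) ∈ S) : L z ∈ S := by
  rw [← Finsupp.sum_single z, Finsupp.sum, map_sum]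
  refine Submodule.sum_mem _ fun e he => ?_
  have h1 := zmod2_ne (Finsupp.mem_support_iff.1 he)
  rw [h1]
  exact h e (Finsupp.mem_support_iff.1 he)

lemma lin_eq {E M : Type*} [AddCommGroup M] [Module (ZMod 2) M]
    (L L' : (E →₀ ZMod 2) →ₗ[ZMod 2] M) (z : E →₀ ZMod 2)
    (h : ∀ e, z e ≠ 0 → L (Finsupp.single e 1) = L' (Finsupp.single e 1)) : L z = L' z := by
  have := lin_mem (L - L') ⊥ z (fun e he => by simp [h e he])
  simpa [sub_eq_zero] using this

open Classical in
lemma del_one {E ι : Type*} [Fintype ι] (e : E) (B : ι → (E →₀ ZMod 2))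
    (h2 : ∀ e, (Finset.univ.filter fun i => B i e ≠ 0).card ≤ 2) :
    ∃ B' : ι → (E →₀ ZMod 2), (∀ e, (Finset.univ.filter fun i => B' i e ≠ 0).card ≤ 2) ∧
      ∀ z, z ∈ Submodule.span (ZMod 2) (Set.range B') ↔
        z ∈ Submodule.span (ZMod 2) (Set.range B) ∧ z e = 0 := by
  by_cases hne : ∃ a, B a e ≠ 0
  swap
  · push Not at hne
    refine ⟨B, h2, fun z => ⟨fun hz => ⟨hz, ?_⟩, fun hz => hz.1⟩⟩
    have : Submodule.span (ZMod 2) (Set.range B) ≤ LinearMap.ker (Finsupp.lapply (R := ZMod 2) (M := ZMod 2) e) := by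
      rw [Submodule.span_le]
      rintro _ ⟨i, rfl⟩
      simpa using hne i
    simpa using this hz
  obtain ⟨a, ha⟩ := hne
  have ha1 := zmod2_ne ha
  let ρ : (E →₀ ZMod 2) →ₗ[ZMod 2] (E →₀ ZMod 2) :=
    LinearMap.id + (Finsupp.lapply (R := ZMod 2) (M := ZMod 2) e).smulRight (B a)
  have hρ : ∀ z, ρ z = z + z e • B a := fun z => by simp [ρ]
  have hspan : Submodule.span (ZMod 2) (Set.range fun i => ρ (B i)) =
      (Submodule.span (ZMod 2) (Set.range B)).map ρ := by
    rw [Submodule.map_span, ← Set.range_comp]; rfl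
  refine ⟨fun i => ρ (B i), fun f => ?_, fun z => ?_⟩
  · by_cases hf : B a f = 0
    · refine le_trans (Finset.card_le_card ?_) (h2 f)
      intro i
      simp [hρ, hf]
    · have hsub : (Finset.univ.filter fun i => ρ (B i) f ≠ 0) ⊆
        (Finset.univ.filter fun i => B i f ≠ 0).erase a ∪
        (Finset.univ.filter fun i => B i e ≠ 0).erase a := by
        intro i
        simp only [Finset.mem_filter, Finset.mem_univ, true_and, Finset.mem_union,
          Finset.mem_erase]
        intro hi
        have hia : i ≠ a := by
          rintro rfl
          apply hi
          rw [hρ, ha1, one_smul, add_self2]; rfl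
        by_cases h : B i e = 0
        · left; refine ⟨hia, ?_⟩
          simpa [hρ, h] using hi
        · right; exact ⟨hia, h⟩
      have h3 := Finset.card_le_card hsub
      have h4 := Finset.card_union_le ((Finset.univ.filter fun i => B i f ≠ 0).erase a)
        ((Finset.univ.filter fun i => B i e ≠ 0).erase a)
      have h5 := Finset.card_erase_of_mem (a := a) (s := Finset.univ.filter fun i => B i f ≠ 0) (by simpa using hf)
      have h6 := Finset.card_erase_of_mem (a := a) (s := Finset.univ.filter fun i => B i e ≠ 0) (by simpa using ha)
      have h7 := h2 f
      have h8 := h2 e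
      beta_reduce
      omega
  · rw [hspan]
    constructor
    · rintro ⟨w, hw, rfl⟩
      refine ⟨?_, ?_⟩
      · rw [hρ]
        exact Submodule.add_mem _ hw (Submodule.smul_mem _ _ (Submodule.subset_span ⟨a, rfl⟩))
      · rw [hρ]; simp [ha1, add_self2]
    · rintro ⟨hz, hz0⟩
      exact ⟨z, hz, by simp [hρ, hz0]⟩

open Classical in
lemma del_many {E ι : Type*} [Fintype ι] (D : Finset E) (B : ι → (E →₀ ZMod 2))
    (h2 : ∀ e, (Finset.univ.filter fun i => B i e ≠ 0).card ≤ 2) :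
    ∃ B' : ι → (E →₀ ZMod 2), (∀ e, (Finset.univ.filter fun i => B' i e ≠ 0).card ≤ 2) ∧
      ∀ z, z ∈ Submodule.span (ZMod 2) (Set.range B') ↔
        z ∈ Submodule.span (ZMod 2) (Set.range B) ∧ ∀ e ∈ D, z e = 0 := by
  induction D using Finset.induction_on with
  | empty => exact ⟨B, h2, by simp⟩
  | insert e D _ ih =>
    obtain ⟨B1, h1, hs1⟩ := ih
    obtain ⟨B2, h2, hs2⟩ := del_one e B1 h1
    refine ⟨B2, h2, fun z => ?_⟩
    rw [hs2, hs1]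
    simp only [Finset.mem_insert, forall_eq_or_imp]
    tauto

/-! ### the grid -/

def hE (i j : ℕ) : Sym2 (ℕ × ℕ) := s((i, j), (i + 1, j))
def vE (i j : ℕ) : Sym2 (ℕ × ℕ) := s((i, j), (i, j + 1))

def gadj (x y : ℕ × ℕ) : Prop := ∃ i j, s(x, y) = hE i j ∨ s(x, y) = vE i j

lemma gadj_symm {x y : ℕ × ℕ} (h : gadj x y) : gadj y x := by
  unfold gadj at *; rwa [Sym2.eq_swap]

lemma hE_inj {i j a b : ℕ} : hE i j = hE a b ↔ i = a ∧ j = b := by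
  simp [hE]; omega
lemma vE_inj {i j a b : ℕ} : vE i j = vE a b ↔ i = a ∧ j = b := by
  simp [vE]; omega
lemma hE_ne_vE {i j a b : ℕ} : hE i j ≠ vE a b := by
  simp [hE, vE]; omega

noncomputable def sq (p : ℕ × ℕ) : Sym2 (ℕ × ℕ) →₀ ZMod 2 :=
  Finsupp.single (hE p.1 p.2) 1 + Finsupp.single (hE p.1 (p.2 + 1)) 1 +
  Finsupp.single (vE p.1 p.2) 1 + Finsupp.single (vE (p.1 + 1) p.2) 1

lemma bd_sq (p : ℕ × ℕ) : bd _ (sq p) = 0 := by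
  simp only [sq, map_add, hE, vE, bd_single]
  have a := add_self2 (Finsupp.single (p.1, p.2) (1 : ZMod 2))
  have b := add_self2 (Finsupp.single (p.1 + 1, p.2) (1 : ZMod 2))
  have c := add_self2 (Finsupp.single (p.1, p.2 + 1) (1 : ZMod 2))
  have d := add_self2 (Finsupp.single (p.1 + 1, p.2 + 1) (1 : ZMod 2))
  linear_combination (norm := module) a + b + c + d

lemma sq_ne {p : ℕ × ℕ} {e : Sym2 (ℕ × ℕ)} (h : sq p e ≠ 0) :
    e = hE p.1 p.2 ∨ e = hE p.1 (p.2 + 1) ∨ e = vE p.1 p.2 ∨ e = vE (p.1 + 1) p.2 := by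
  by_contra hc
  push Not at hc
  apply h
  simp [sq, hc.1.symm, hc.2.1.symm, hc.2.2.1.symm, hc.2.2.2.symm]

noncomputable def sqN (N : ℕ) (p : Fin N × Fin N) : Sym2 (ℕ × ℕ) →₀ ZMod 2 := sq (p.1, p.2)

open Classical in
lemma sqN_two (N : ℕ) (e : Sym2 (ℕ × ℕ)) :
    (Finset.univ.filter fun i => sqN N i e ≠ 0).card ≤ 2 := by
  have key : ∃ c d : ℕ × ℕ, ∀ p, sq p e ≠ 0 → p = c ∨ p = d := by
    by_cases h : ∃ p, sq p e ≠ 0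
    swap
    · push Not at h
      exact ⟨0, 0, fun p hp => absurd (h p) hp⟩
    obtain ⟨p, hp⟩ := h
    have hh : ∀ a b, e = hE a b → ∃ c d : ℕ × ℕ, ∀ p, sq p e ≠ 0 → p = c ∨ p = d := by
      rintro a b rfl
      refine ⟨(a, b), (a, b - 1), fun p hp => ?_⟩
      have := sq_ne hp
      simp only [hE_inj, hE_ne_vE, or_false] at this
      rcases p with ⟨p, q⟩
      simp only [Prod.mk.injEq] at *; omega
    have hv : ∀ a b, e = vE a b → ∃ c d : ℕ × ℕ, ∀ p, sq p e ≠ 0 → p = c ∨ p = d := by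
      rintro a b rfl
      refine ⟨(a, b), (a - 1, b), fun p hp => ?_⟩
      have := sq_ne hp
      simp only [vE_inj, hE_ne_vE.symm, false_or] at this
      rcases p with ⟨p, q⟩
      simp only [Prod.mk.injEq] at *; omega
    rcases sq_ne hp with h | h | h | h
    · exact hh _ _ h
    · exact hh _ _ h
    · exact hv _ _ h
    · exact hv _ _ h
  obtain ⟨c, d, hcd⟩ := key
  have hinj : Function.Injective (fun p : Fin N × Fin N => ((p.1 : ℕ), (p.2 : ℕ))) := by
    rintro ⟨a, b⟩ ⟨a', b'⟩ h
    simpa [Fin.ext_iff] using h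
  rw [← Finset.card_image_of_injective _ hinj]
  refine le_trans (Finset.card_le_card (t := {c, d}) ?_) Finset.card_le_two
  intro x hx
  simp only [Finset.mem_image, Finset.mem_filter, Finset.mem_univ, true_and] at hx
  obtain ⟨p, hp, rfl⟩ := hx
  simpa using hcd _ hp

noncomputable def pth (x : ℕ × ℕ) : Sym2 (ℕ × ℕ) →₀ ZMod 2 :=
  (∑ i ∈ Finset.range x.1, Finsupp.single (hE i 0) 1) +
  ∑ j ∈ Finset.range x.2, Finsupp.single (vE x.1 j) 1

lemma pth_v (i j : ℕ) : Finsupp.single (vE i j) 1 + pth (i, j) + pth (i, j + 1) = 0 := by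
  simp only [pth, Finset.sum_range_succ]
  have a := add_self2 (Finsupp.single (vE i j) (1 : ZMod 2))
  have b := add_self2 (∑ i ∈ Finset.range i, Finsupp.single (hE i 0) (1 : ZMod 2))
  have c := add_self2 (∑ j ∈ Finset.range j, Finsupp.single (vE i j) (1 : ZMod 2))
  linear_combination (norm := module) a + b + c

lemma pth_h (N i j : ℕ) (hi : i < N) (hj : j < N) :
    Finsupp.single (hE i j) 1 + pth (i, j) + pth (i + 1, j) ∈
      Submodule.span (ZMod 2) (Set.range (sqN N)) := by
  induction j with
  | zero =>
    convert Submodule.zero_mem _ using 1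
    simp only [pth, Finset.sum_range_succ, Finset.range_zero, Finset.sum_empty]
    have a := add_self2 (Finsupp.single (hE i 0) (1 : ZMod 2))
    have b := add_self2 (∑ i ∈ Finset.range i, Finsupp.single (hE i 0) (1 : ZMod 2))
    linear_combination (norm := module) a + b
  | succ j ih =>
    have h1 := ih (by omega)
    have h2 : sq (i, j) ∈ Submodule.span (ZMod 2) (Set.range (sqN N)) :=
      Submodule.subset_span ⟨(⟨i, hi⟩, ⟨j, by omega⟩), rfl⟩
    convert Submodule.add_mem _ h1 h2 using 1
    have a := pth_v i j
    have b := pth_v (i + 1) j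
    have c := add_self2 (Finsupp.single (vE i j) (1 : ZMod 2))
    have d := add_self2 (Finsupp.single (vE (i + 1) j) (1 : ZMod 2))
    have e := add_self2 (Finsupp.single (hE i j) (1 : ZMod 2))
    have f := add_self2 (pth (i, j))
    have g := add_self2 (pth (i + 1, j))
    simp only [sq]
    linear_combination (norm := module) a + b - c - d - e - f - g

/-- cycles of the box are sums of unit squares -/
lemma cyc_span (N : ℕ) (z : Sym2 (ℕ × ℕ) →₀ ZMod 2) (hz : bd _ z = 0)
    (hs : ∀ e, z e ≠ 0 → ∃ i < N, ∃ j < N, e = hE i j ∨ e = vE i j) :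
    z ∈ Submodule.span (ZMod 2) (Set.range (sqN N)) := by
  let P := Finsupp.linearCombination (ZMod 2) pth
  have := lin_mem (LinearMap.id + P ∘ₗ bd _) (Submodule.span (ZMod 2) (Set.range (sqN N))) z ?_
  · simpa [hz] using this
  · intro e he
    obtain ⟨i, hi, j, hj, rfl | rfl⟩ := hs e he
    · have := pth_h N i j hi hj
      simpa [P, hE, bd_single, add_assoc] using this
    · have := pth_v i j
      have h0 := Submodule.zero_mem (Submodule.span (ZMod 2) (Set.range (sqN N)))
      rw [← this] at h0
      simpa [P, vE, bd_single, add_assoc] using h0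

end ICP


namespace ICP

def RI (S : Set (ℕ × ℕ)) : ℕ × ℕ → ℕ × ℕ → Prop :=
  Relation.ReflTransGen (fun a b => a ∈ S ∧ b ∈ S ∧ gadj a b)

lemma RI_mono {S S' : Set (ℕ × ℕ)} (h : S ⊆ S') {x y} (hr : RI S x y) : RI S' x y :=
  Relation.ReflTransGen.mono (fun _ _ hab => ⟨h hab.1, h hab.2.1, hab.2.2⟩) _ _ hr

lemma RI_symm {S : Set (ℕ × ℕ)} {x y} (hr : RI S x y) : RI S y x := by
  induction hr with
  | refl => exact Relation.ReflTransGen.refl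
  | tail _ hbc ih => exact Relation.ReflTransGen.head ⟨hbc.2.1, hbc.1, gadj_symm hbc.2.2⟩ ih

lemma RI_trans {S : Set (ℕ × ℕ)} {x y z} (h : RI S x y) (h' : RI S y z) : RI S x z :=
  Relation.ReflTransGen.trans h h'

lemma RI_bd (S : Set (ℕ × ℕ)) (X : Set (Sym2 (ℕ × ℕ)))
    (hX : ∀ x ∈ S, ∀ y ∈ S, gadj x y → s(x, y) ∈ X) {x y} (h : RI S x y) :
    Finsupp.single x 1 + Finsupp.single y 1 ∈
      (Finsupp.supported (ZMod 2) (ZMod 2) X).map (bd _) := by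
  induction h with
  | refl => rw [add_self2]; exact Submodule.zero_mem _
  | @tail b c _ hbc ih =>
    have h1 : bd _ (Finsupp.single s(b, c) 1) ∈
        (Finsupp.supported (ZMod 2) (ZMod 2) X).map (bd _) :=
      Submodule.mem_map_of_mem (Finsupp.single_mem_supported _ _ (hX _ hbc.1 _ hbc.2.1 hbc.2.2))
    rw [bd_single] at h1
    convert Submodule.add_mem _ ih h1 using 1
    have := add_self2 (Finsupp.single b (1 : ZMod 2))
    linear_combination (norm := module) -this

lemma mem_supported' {E : Type*} {X : Set E} {z : E →₀ ZMod 2} :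
    z ∈ Finsupp.supported (ZMod 2) (ZMod 2) X ↔ ∀ e, z e ≠ 0 → e ∈ X := by
  rw [Finsupp.mem_supported]
  constructor
  · intro h e he; exact h (by simpa using he)
  · intro h e he; exact h e (by simpa using he)

lemma gbox {N : ℕ} {x y : ℕ × ℕ} (hx : x.1 < N ∧ x.2 < N) (hy : y.1 < N ∧ y.2 < N)
    (h : gadj x y) : ∃ i < N, ∃ j < N, s(x, y) = hE i j ∨ s(x, y) = vE i j := by
  obtain ⟨i, j, h⟩ := h
  have hm : (i, j) ∈ s(x, y) := by
    rcases h with h | h <;> rw [h] <;> simp [hE, vE]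
  rcases Sym2.mem_iff.1 hm with rfl | rfl
  · exact ⟨i, hx.1, j, hx.2, h⟩
  · exact ⟨i, hy.1, j, hy.2, h⟩

open Classical in
lemma minor_basis {V : Type*} [Fintype V] (G : SimpleGraph V) (T : V → Set (ℕ × ℕ))
    (hne : ∀ v, (T v).Nonempty) (hdis : ∀ u v x, x ∈ T u → x ∈ T v → u = v)
    (hconn : ∀ v, ∀ x ∈ T v, ∀ y ∈ T v, RI (T v) x y) (N : ℕ)
    (hN : ∀ v, ∀ x ∈ T v, x.1 < N ∧ x.2 < N) (ε : Sym2 V → Sym2 (ℕ × ℕ))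
    (hε : ∀ e ∈ G.edgeSet, ∃ u v x y, e = s(u, v) ∧ x ∈ T u ∧ y ∈ T v ∧ gadj x y ∧
      ε e = s(x, y)) :
    ∃ Y : Fin N × Fin N → (Sym2 V →₀ ZMod 2),
      (∀ e, (Finset.univ.filter fun i => Y i e ≠ 0).card ≤ 2) ∧
      ∀ z, z ∈ Submodule.span (ZMod 2) (Set.range Y) ↔
        bd _ z = 0 ∧ ∀ e, z e ≠ 0 → e ∈ G.edgeSet := by
  let I : Set (Sym2 (ℕ × ℕ)) := {e | ∃ v x y, x ∈ T v ∧ y ∈ T v ∧ gadj x y ∧ e = s(x, y)}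
  let X : Set (Sym2 (ℕ × ℕ)) := {e | e ∈ I ∨ ∃ e' ∈ G.edgeSet, e = ε e'}
  have hεinj : ∀ e ∈ G.edgeSet, ∀ e' ∈ G.edgeSet, ε e = ε e' → e = e' := by
    intro e he e' he' h
    obtain ⟨u, v, x, y, h1, h2, h3, -, h5⟩ := hε e he
    obtain ⟨u', v', x', y', h1', h2', h3', -, h5'⟩ := hε e' he'
    rw [h5, h5', Sym2.eq_iff] at h
    rcases h with ⟨rfl, rfl⟩ | ⟨rfl, rfl⟩
    · rw [h1, h1', hdis _ _ _ h2 h2', hdis _ _ _ h3 h3']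
    · rw [h1, h1', hdis _ _ _ h2 h3', hdis _ _ _ h3 h2', Sym2.eq_swap]
  have hεI : ∀ e ∈ G.edgeSet, ε e ∉ I := by
    rintro e he ⟨w, a, b, ha, hb, -, h⟩
    obtain ⟨u, v, x, y, h1, h2, h3, -, h5⟩ := hε e he
    have huv : u ≠ v := by
      rintro rfl; subst h1; simp at he
    rw [h5, Sym2.eq_iff] at h
    rcases h with ⟨rfl, rfl⟩ | ⟨rfl, rfl⟩
    · exact huv ((hdis _ _ _ h2 ha).trans (hdis _ _ _ h3 hb).symm)
    · exact huv ((hdis _ _ _ h2 hb).trans (hdis _ _ _ h3 ha).symm)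
  have hXbox : ∀ e ∈ X, ∃ i < N, ∃ j < N, e = hE i j ∨ e = vE i j := by
    rintro e (⟨v, x, y, hx, hy, hg, rfl⟩ | ⟨e', he', rfl⟩)
    · exact gbox (hN _ _ hx) (hN _ _ hy) hg
    · obtain ⟨u, v, x, y, h1, h2, h3, h4, h5⟩ := hε e' he'
      rw [h5]
      exact gbox (hN _ _ h2) (hN _ _ h3) h4
  -- restrict to X
  let D : Finset (Sym2 (ℕ × ℕ)) :=
    ((Finset.univ : Finset (Fin N × Fin N)).biUnion fun p => (sqN N p).support).filter (· ∉ X)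
  obtain ⟨B, hB2, hBs⟩ := del_many D (sqN N) (sqN_two N)
  have hBs' : ∀ z, z ∈ Submodule.span (ZMod 2) (Set.range B) ↔
      bd _ z = 0 ∧ ∀ e, z e ≠ 0 → e ∈ X := by
    intro z
    rw [hBs]
    constructor
    · rintro ⟨hz, hD⟩
      constructor
      · have : Submodule.span (ZMod 2) (Set.range (sqN N)) ≤ LinearMap.ker (bd _) := by
          rw [Submodule.span_le]
          rintro _ ⟨i, rfl⟩
          exact bd_sq _
        exact this hz
      · intro e he
        by_contra hX
        have : Submodule.span (ZMod 2) (Set.range (sqN N)) ≤ Finsupp.supported (ZMod 2) (ZMod 2)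
            {e | ∃ p, sqN N p e ≠ 0} := by
          rw [Submodule.span_le]
          rintro _ ⟨i, rfl⟩
          exact mem_supported'.2 fun e he => ⟨i, he⟩
        obtain ⟨p, hp⟩ := mem_supported'.1 (this hz) e he
        apply he
        apply hD
        simp only [D, Finset.mem_filter, Finset.mem_biUnion, Finset.mem_univ, true_and]
        exact ⟨⟨p, by simpa using hp⟩, hX⟩
    · rintro ⟨hz, hs⟩
      refine ⟨cyc_span N z hz fun e he => hXbox e (hs e he), fun e he => ?_⟩
      by_contra h
      exact (Finset.mem_filter.1 he).2 (hs e h)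
  -- the projection
  let q : (Sym2 (ℕ × ℕ) →₀ ZMod 2) →ₗ[ZMod 2] (Sym2 V →₀ ZMod 2) :=
    ∑ e ∈ G.edgeFinset, (Finsupp.lapply (R := ZMod 2) (M := ZMod 2) (ε e)).smulRight
      (Finsupp.single e (1 : ZMod 2))
  have hq : ∀ z e, q z e = if e ∈ G.edgeSet then z (ε e) else 0 := by
    intro z e
    simp only [q, LinearMap.sum_apply, LinearMap.smulRight_apply, Finsupp.lapply_apply,
      Finsupp.finsetSum_apply, Finsupp.smul_apply, Finsupp.single_apply, smul_eq_mul, mul_ite,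
      mul_one, mul_zero, Finset.sum_ite_eq', SimpleGraph.mem_edgeFinset]
  have hqε : ∀ e ∈ G.edgeSet, q (Finsupp.single (ε e) 1) = Finsupp.single e 1 := by
    intro e he
    ext e'
    rw [hq]
    by_cases h : e = e'
    · subst h; simp [he]
    · by_cases he' : e' ∈ G.edgeSet
      · have : ε e ≠ ε e' := fun h' => h (hεinj _ he _ he' h')
        simp [h, this]
      · simp [h, he']
  have hqI : ∀ e ∈ I, q (Finsupp.single e 1) = 0 := by
    intro e he
    ext e'
    rw [hq]
    by_cases he' : e' ∈ G.edgeSet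
    · have : e ≠ ε e' := fun h' => hεI _ he' (h' ▸ he)
      simp [this]
    · simp [he']
  let τ : V → (ℕ × ℕ →₀ ZMod 2) →ₗ[ZMod 2] ZMod 2 := fun v =>
    Finsupp.linearCombination (ZMod 2) (fun x => if x ∈ T v then (1 : ZMod 2) else 0)
  have hτ : ∀ v u x, x ∈ T u → τ v (Finsupp.single x 1) = if u = v then 1 else 0 := by
    intro v u x hx
    simp only [τ, Finsupp.linearCombination_single, one_smul]
    by_cases h : u = v
    · subst h; simp [hx]
    · have : x ∉ T v := fun h' => h (hdis _ _ _ hx h')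
      simp [h, this]
  have hcomm : ∀ v z, (∀ e, z e ≠ 0 → e ∈ X) → τ v (bd _ z) = bd _ (q z) v := by
    intro v z hz
    refine lin_eq (τ v ∘ₗ bd _) (Finsupp.lapply v ∘ₗ bd _ ∘ₗ q) z fun e he => ?_
    simp only [LinearMap.comp_apply, Finsupp.lapply_apply]
    rcases hz e he with h | ⟨e', he', rfl⟩
    · rw [hqI e h]
      obtain ⟨w, x, y, hx, hy, -, rfl⟩ := h
      rw [bd_single, map_add, hτ v w x hx, hτ v w y hy, add_self2]; simp
    · rw [hqε e' he']
      obtain ⟨u, w, x, y, h1, h2, h3, -, h5⟩ := hε e' he'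
      rw [h5, h1, bd_single, bd_single, map_add, hτ v u x h2, hτ v w y h3]
      simp [Finsupp.single_apply]
  refine ⟨fun i => q (B i), fun e => ?_, fun z => ?_⟩
  · by_cases he : e ∈ G.edgeSet
    · simpa [hq, he] using hB2 (ε e)
    · simp [hq, he]
  have hspan : Submodule.span (ZMod 2) (Set.range fun i => q (B i)) =
      (Submodule.span (ZMod 2) (Set.range B)).map q := by
    rw [Submodule.map_span, ← Set.range_comp]; rfl
  rw [hspan]
  constructor
  · rintro ⟨w, hw, rfl⟩
    obtain ⟨h0, hX⟩ := (hBs' w).1 hw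
    constructor
    · ext v
      rw [← hcomm v w hX, h0]; simp
    · intro e he
      rw [hq] at he
      by_contra h
      simp [h] at he
  · rintro ⟨hz0, hzs⟩
    let z0 : Sym2 (ℕ × ℕ) →₀ ZMod 2 :=
      Finsupp.linearCombination (ZMod 2) (fun e => Finsupp.single (ε e) (1 : ZMod 2)) z
    have hz0X : ∀ e, z0 e ≠ 0 → e ∈ X := by
      have : z0 ∈ Finsupp.supported (ZMod 2) (ZMod 2) X := by
        refine lin_mem _ _ z fun e he => ?_
        simp only [Finsupp.linearCombination_single, one_smul]
        exact Finsupp.single_mem_supported _ _ (Or.inr ⟨e, hzs e he, rfl⟩)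
      exact mem_supported'.1 this
    have hqz0 : q z0 = z := by
      refine lin_eq (q ∘ₗ Finsupp.linearCombination (ZMod 2)
        (fun e => Finsupp.single (ε e) (1 : ZMod 2))) LinearMap.id z fun e he => ?_
      simp [hqε e (hzs e he)]
    have hτ0 : ∀ v, τ v (bd _ z0) = 0 := fun v => by
      rw [hcomm v z0 hz0X, hqz0, hz0]; rfl
    choose x0 hx0 using hne
    have hW : bd _ z0 ∈ (Finsupp.supported (ZMod 2) (ZMod 2) I).map (bd _) := by
      have := lin_mem (LinearMap.id + ∑ v, (τ v).smulRight (Finsupp.single (x0 v) (1 : ZMod 2)))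
        ((Finsupp.supported (ZMod 2) (ZMod 2) I).map (bd _)) (bd _ z0) ?_
      · simpa [hτ0] using this
      · intro x hx
        have hxT : ∃ u, x ∈ T u := by
          have : bd _ z0 ∈ Finsupp.supported (ZMod 2) (ZMod 2) {x | ∃ u, x ∈ T u} := by
            refine lin_mem _ _ z0 fun e he => ?_
            rcases hz0X e he with ⟨w, a, b, ha, hb, -, rfl⟩ | ⟨e', he', rfl⟩
            · rw [bd_single]
              exact Submodule.add_mem _ (Finsupp.single_mem_supported _ _ ⟨w, ha⟩)
                (Finsupp.single_mem_supported _ _ ⟨w, hb⟩)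
            · obtain ⟨u, w, a, b, -, ha, hb, -, h5⟩ := hε e' he'
              rw [h5, bd_single]
              exact Submodule.add_mem _ (Finsupp.single_mem_supported _ _ ⟨u, ha⟩)
                (Finsupp.single_mem_supported _ _ ⟨w, hb⟩)
          exact mem_supported'.1 this x hx
        obtain ⟨u, hu⟩ := hxT
        have h1 := RI_bd (T u) I (fun a ha b hb hg => ⟨u, a, b, ha, hb, hg, rfl⟩)
          (hconn u x hu _ (hx0 u))
        convert h1 using 1
        simp only [LinearMap.add_apply, LinearMap.id_apply, LinearMap.sum_apply,
          LinearMap.smulRight_apply, hτ _ u x hu, ite_smul, one_smul, zero_smul,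
          Finset.sum_ite_eq, Finset.mem_univ, if_true]
    obtain ⟨w, hwI, hw⟩ := hW
    have hwI' := mem_supported'.1 hwI
    refine ⟨z0 + w, (hBs' _).2 ⟨?_, ?_⟩, ?_⟩
    · rw [map_add, hw, add_self2]
    · intro e he
      by_cases h : z0 e = 0
      · refine Or.inl (hwI' e ?_)
        simpa [h] using he
      · exact hz0X e h
    · have hqw : q w = 0 := by
        have := lin_mem q ⊥ w fun e he => by rw [hqI e (hwI' e he)]; simp
        simpa using this
      rw [map_add, hqz0, hqw, add_zero]

open Classical in
/-- nonzero cycles are long -/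
lemma weight_girth {V : Type*} [Fintype V] (G : SimpleGraph V) (g : ℕ) (hg : (g : ℕ∞) ≤ G.egirth)
    (z : Sym2 V →₀ ZMod 2) (hz : bd _ z = 0) (hs : ∀ e, z e ≠ 0 → e ∈ G.edgeSet) (hne : z ≠ 0) :
    g ≤ z.support.card := by
  let S : SimpleGraph V := SimpleGraph.fromEdgeSet {e | z e ≠ 0}
  have hSG : S ≤ G := by
    intro a b hab
    simp only [S, SimpleGraph.fromEdgeSet_adj] at hab
    exact hs _ hab.1
  have hSe : ∀ e, z e ≠ 0 → e ∈ S.edgeSet := by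
    intro e he
    have h1 := G.not_isDiag_of_mem_edgeSet (hs e he)
    simp only [S, SimpleGraph.edgeSet_fromEdgeSet]
    exact ⟨he, h1⟩
  have hcyc : ¬ S.IsAcyclic := by
    intro hac
    obtain ⟨e, he⟩ : ∃ e, z e ≠ 0 := by
      by_contra h; push Not at h; exact hne (Finsupp.ext h)
    induction e using Sym2.ind with
    | _ u v =>
    have hadj : S.Adj u v := hSe _ he
    have hbr := SimpleGraph.isAcyclic_iff_forall_adj_isBridge.1 hac hadj
    rw [SimpleGraph.isBridge_iff] at hbr
    let S' := S.deleteEdges {s(u, v)}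
    let τ : (V →₀ ZMod 2) →ₗ[ZMod 2] ZMod 2 :=
      Finsupp.linearCombination (ZMod 2) (fun x => if S'.Reachable u x then (1 : ZMod 2) else 0)
    have h1 : τ (bd _ z) = Finsupp.lapply (R := ZMod 2) s(u, v) z := by
      refine lin_eq (τ ∘ₗ bd _) (Finsupp.lapply (R := ZMod 2) s(u, v)) z fun e he => ?_
      induction e using Sym2.ind with
      | _ a b =>
      by_cases hab : s(a, b) = s(u, v)
      · rw [LinearMap.comp_apply, hab, bd_single]
        have : ¬ S'.Reachable u v := hbr
        simp [τ, this]
      · have hr : S'.Adj a b := by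
          simp only [S', SimpleGraph.deleteEdges_adj]
          exact ⟨hSe _ he, by simpa using hab⟩
        have : S'.Reachable u a ↔ S'.Reachable u b :=
          ⟨fun h => h.trans hr.reachable, fun h => h.trans hr.symm.reachable⟩
        rw [LinearMap.comp_apply, bd_single]
        simp only [τ, map_add, Finsupp.linearCombination_single, this, add_self2,
          Finsupp.lapply_apply]
        rw [Finsupp.single_apply, if_neg hab]
    rw [hz, map_zero] at h1
    exact he h1.symm
  unfold SimpleGraph.IsAcyclic at hcyc
  push Not at hcyc
  obtain ⟨a, w, hw⟩ := hcyc
  have h1 : (g : ℕ∞) ≤ w.length := (hg.trans (SimpleGraph.egirth_anti hSG)).trans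
    (SimpleGraph.egirth_le_length hw)
  have h2 : g ≤ w.length := by exact_mod_cast h1
  refine h2.trans ?_
  rw [← SimpleGraph.Walk.length_edges, ← List.toFinset_card_of_nodup hw.edges_nodup]
  apply Finset.card_le_card
  intro e he
  have := w.edges_subset_edgeSet (List.mem_toFinset.1 he)
  simp only [S, SimpleGraph.edgeSet_fromEdgeSet] at this
  simpa using this.1

open Classical in
lemma count {V ι : Type*} [Fintype V] [Nonempty V] [Fintype ι] (G : SimpleGraph V) (g : ℕ)
    (hg : (g : ℕ∞) ≤ G.egirth) (Y : ι → (Sym2 V →₀ ZMod 2))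
    (h2 : ∀ e, (Finset.univ.filter fun i => Y i e ≠ 0).card ≤ 2)
    (hY : ∀ z, z ∈ Submodule.span (ZMod 2) (Set.range Y) ↔
        bd _ z = 0 ∧ ∀ e, z e ≠ 0 → e ∈ G.edgeSet) :
    g * (G.edgeFinset.card + 1) ≤ 2 * G.edgeFinset.card + g * Fintype.card V := by
  let Z := Submodule.span (ZMod 2) (Set.range Y)
  let P := Finset.univ.filter fun i => Y i ≠ 0
  -- dimension lower bound
  have hdim : G.edgeFinset.card + 1 ≤ Module.finrank (ZMod 2) Z + Fintype.card V := by
    let S := Finsupp.supported (ZMod 2) (ZMod 2) G.edgeSet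
    let L : S →ₗ[ZMod 2] (V →₀ ZMod 2) := (bd V).domRestrict S
    have hS : Module.finrank (ZMod 2) S = G.edgeFinset.card := by
      rw [(Finsupp.supportedEquivFinsupp (M := ZMod 2) (R := ZMod 2) G.edgeSet).finrank_eq]
      simp [SimpleGraph.edgeFinset]
    have hrn := LinearMap.finrank_range_add_finrank_ker (K := ZMod 2) (V := S) (V₂ := V →₀ ZMod 2) L
    have hker : Module.finrank (ZMod 2) (LinearMap.ker L) ≤ Module.finrank (ZMod 2) Z := by
      have hmap : (LinearMap.ker L).map S.subtype ≤ Z := by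
        rintro _ ⟨w, hw, rfl⟩
        exact (hY _).2 ⟨hw, mem_supported'.1 w.2⟩
      rw [(Submodule.equivMapOfInjective S.subtype S.subtype_injective (LinearMap.ker L)).finrank_eq]
      exact Submodule.finrank_mono hmap
    let aug : (V →₀ ZMod 2) →ₗ[ZMod 2] ZMod 2 :=
      Finsupp.linearCombination (ZMod 2) (fun _ => (1 : ZMod 2))
    have haug := aug.finrank_range_add_finrank_ker
    have hsurj : LinearMap.range aug = ⊤ := by
      rw [LinearMap.range_eq_top]
      intro c
      obtain ⟨v⟩ := ‹Nonempty V›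
      exact ⟨Finsupp.single v c, by simp [aug]⟩
    have hle : LinearMap.range L ≤ LinearMap.ker aug := by
      rintro _ ⟨w, rfl⟩
      rw [LinearMap.mem_ker]
      have := lin_eq (aug ∘ₗ bd V) 0 w.1 fun e _ => by
        induction e using Sym2.ind with
        | _ a b =>
        rw [LinearMap.comp_apply, bd_single, LinearMap.zero_apply, map_add]
        simp only [aug, Finsupp.linearCombination_single]
        exact add_self2 _
      exact this
    have hle' := Submodule.finrank_mono hle
    rw [hsurj] at haug
    simp only [finrank_top, Module.finrank_self, Module.finrank_finsupp_self] at haug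
    omega
  have hup : Module.finrank (ZMod 2) Z ≤ P.card := by
    have : Z ≤ Submodule.span (ZMod 2) ((P.image Y : Finset _) : Set (Sym2 V →₀ ZMod 2)) := by
      rw [Submodule.span_le]
      rintro _ ⟨i, rfl⟩
      by_cases h : Y i = 0
      · rw [h]; exact Submodule.zero_mem _
      · exact Submodule.subset_span (by simp only [Finset.coe_image]; exact ⟨i, by simp [P, h], rfl⟩)
    exact (Submodule.finrank_mono this).trans
      ((finrank_span_finset_le_card _).trans Finset.card_image_le)
  have hYi : ∀ i, bd _ (Y i) = 0 ∧ ∀ e, Y i e ≠ 0 → e ∈ G.edgeSet :=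
    fun i => (hY _).1 (Submodule.subset_span ⟨i, rfl⟩)
  have hcount : P.card * g ≤ 2 * G.edgeFinset.card := by
    have h3 : P.card * g ≤ ∑ i ∈ P, (Y i).support.card := by
      rw [← smul_eq_mul]
      refine Finset.card_nsmul_le_sum _ _ _ fun i hi => ?_
      exact weight_girth G g hg _ (hYi i).1 (hYi i).2 (by simpa [P] using hi)
    have h4 : ∑ i ∈ P, (Y i).support.card ≤ ∑ i, (Y i).support.card :=
      Finset.sum_le_sum_of_subset (Finset.subset_univ _)
    have h5 : ∑ i, (Y i).support.card =
        ∑ e ∈ G.edgeFinset, (Finset.univ.filter fun i => Y i e ≠ 0).card := by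
      have : ∀ i, (Y i).support = G.edgeFinset.filter fun e => Y i e ≠ 0 := by
        intro i; ext e
        simp only [Finsupp.mem_support_iff, Finset.mem_filter, SimpleGraph.mem_edgeFinset]
        exact ⟨fun h => ⟨(hYi i).2 e h, h⟩, fun h => h.2⟩
      simp_rw [this]
      exact Finset.sum_card_bipartiteAbove_eq_sum_card_bipartiteBelow
        (fun i e => Y i e ≠ 0)
    have h6 : ∑ e ∈ G.edgeFinset, (Finset.univ.filter fun i => Y i e ≠ 0).card ≤
        G.edgeFinset.card • 2 := Finset.sum_le_card_nsmul _ _ _ fun e _ => h2 e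
    simp only [smul_eq_mul] at h6
    omega
  calc g * (G.edgeFinset.card + 1) ≤ g * (P.card + Fintype.card V) :=
        Nat.mul_le_mul_left _ (by omega)
    _ = P.card * g + g * Fintype.card V := by ring
    _ ≤ _ := by omega

end ICP


namespace ICP

def pt (R h : ℝ) (k : ℕ × ℕ) : ℝ × ℝ := (k.1 * h - R, k.2 * h - R)

def nb (R h : ℝ) (A : Set (ℝ × ℝ)) : Set (ℕ × ℕ) := {k | ∃ a ∈ A, dist a (pt R h k) < h}

lemma nb_mono {R h : ℝ} {A B : Set (ℝ × ℝ)} (hAB : A ⊆ B) : nb R h A ⊆ nb R h B :=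
  fun _ ⟨a, ha, hd⟩ => ⟨a, hAB ha, hd⟩

lemma dist_pt {R h : ℝ} {a : ℝ × ℝ} {k : ℕ × ℕ} :
    dist a (pt R h k) < h ↔ |a.1 - (k.1 * h - R)| < h ∧ |a.2 - (k.2 * h - R)| < h := by
  rw [Prod.dist_eq, max_lt_iff, Real.dist_eq, Real.dist_eq]; rfl

lemma near_nat {h x : ℝ} (hh : 0 < h) {k l : ℕ} (hk : |x - k * h| < h) (hl : |x - l * h| < h) :
    k = l ∨ k = l + 1 ∨ l = k + 1 := by
  rw [abs_lt] at hk hl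
  have h1 : ((k : ℝ) - l - 2) * h < 0 := by linarith
  have h2 : ((l : ℝ) - k - 2) * h < 0 := by linarith
  have h3 : (k : ℝ) < l + 2 := by
    by_contra hc
    have : 0 ≤ ((k : ℝ) - l - 2) * h := mul_nonneg (by linarith) hh.le
    linarith
  have h4 : (l : ℝ) < k + 2 := by
    by_contra hc
    have : 0 ≤ ((l : ℝ) - k - 2) * h := mul_nonneg (by linarith) hh.le
    linarith
  have h3' : k < l + 2 := by exact_mod_cast h3
  have h4' : l < k + 2 := by exact_mod_cast h4
  omega

lemma nb_point {R h : ℝ} (hh : 0 < h) (a : ℝ × ℝ) {k l : ℕ × ℕ}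
    (hk : dist a (pt R h k) < h) (hl : dist a (pt R h l) < h) : RI (nb R h {a}) k l := by
  have hk' := dist_pt.1 hk
  have hl' := dist_pt.1 hl
  have hm : dist a (pt R h (k.1, l.2)) < h := dist_pt.2 ⟨hk'.1, hl'.2⟩
  have mk : k ∈ nb R h {a} := ⟨a, rfl, hk⟩
  have ml : l ∈ nb R h {a} := ⟨a, rfl, hl⟩
  have mm : (k.1, l.2) ∈ nb R h {a} := ⟨a, rfl, hm⟩
  have h1 := near_nat hh (x := a.1 + R) (k := k.1) (l := l.1)
    (by convert hk'.1 using 2; ring) (by convert hl'.1 using 2; ring)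
  have h2 := near_nat hh (x := a.2 + R) (k := k.2) (l := l.2)
    (by convert hk'.2 using 2; ring) (by convert hl'.2 using 2; ring)
  obtain ⟨k1, k2⟩ := k
  obtain ⟨l1, l2⟩ := l
  simp only at h1 h2 mm
  refine RI_trans (y := (k1, l2)) ?_ ?_
  · rcases h2 with rfl | rfl | rfl
    · exact Relation.ReflTransGen.refl
    · exact Relation.ReflTransGen.single ⟨mk, mm, k1, l2, Or.inr (by rw [vE, Sym2.eq_swap])⟩
    · exact Relation.ReflTransGen.single ⟨mk, mm, k1, k2, Or.inr rfl⟩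
  · rcases h1 with rfl | rfl | rfl
    · exact Relation.ReflTransGen.refl
    · exact Relation.ReflTransGen.single ⟨mm, ml, l1, l2, Or.inl (by rw [hE, Sym2.eq_swap])⟩
    · exact Relation.ReflTransGen.single ⟨mm, ml, k1, l2, Or.inl rfl⟩

lemma floor_near {h x : ℝ} (hh : 0 < h) (hx : 0 ≤ x) : ∃ k : ℕ, |x - k * h| < h := by
  refine ⟨⌊x / h⌋₊, ?_⟩
  have h1 := Nat.floor_le (div_nonneg hx hh.le)
  have h2 := Nat.lt_floor_add_one (x / h)
  rw [le_div_iff₀ hh] at h1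
  rw [div_lt_iff₀ hh] at h2
  rw [abs_lt]
  constructor <;> nlinarith

lemma nb_cover {R h : ℝ} (hh : 0 < h) (a : ℝ × ℝ) (ha : dist a 0 < R) :
    ∃ k, dist a (pt R h k) < h := by
  rw [Prod.dist_eq, max_lt_iff, Real.dist_eq, Real.dist_eq] at ha
  simp only [Prod.fst_zero, Prod.snd_zero, sub_zero, abs_lt] at ha
  obtain ⟨k, hk⟩ := floor_near hh (x := a.1 + R) (by linarith)
  obtain ⟨l, hl⟩ := floor_near hh (x := a.2 + R) (by linarith)
  refine ⟨(k, l), dist_pt.2 ⟨?_, ?_⟩⟩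
  · convert hk using 2; simp only; ring
  · convert hl using 2; simp only; ring

lemma nb_conn {R h : ℝ} (hh : 0 < h) {A : Set (ℝ × ℝ)} (hA : IsPreconnected A)
    (hR : A ⊆ Metric.ball 0 R) : ∀ k ∈ nb R h A, ∀ l ∈ nb R h A, RI (nb R h A) k l := by
  rintro k ⟨a, ha, hk⟩ l ⟨b, hb, hl⟩
  refine hA.induction₂ (fun a b => ∀ k l, dist a (pt R h k) < h → dist b (pt R h l) < h →
    RI (nb R h A) k l) ?_ ?_ ?_ ha hb k l hk hl
  · intro x hx
    obtain ⟨m, hm⟩ := nb_cover hh x (hR hx)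
    have : ∀ᶠ y in nhdsWithin x A, dist y (pt R h m) < h := by
      apply nhdsWithin_le_nhds
      exact (isOpen_lt (continuous_id.dist continuous_const) continuous_const).mem_nhds hm
    filter_upwards [this, self_mem_nhdsWithin] with y hy hyA k l hk hl
    exact RI_trans (RI_mono (nb_mono (singleton_subset_iff.2 hx)) (nb_point hh x hk hm))
      (RI_mono (nb_mono (singleton_subset_iff.2 hyA)) (nb_point hh y hy hl))
  · intro x y z hx hy hz h1 h2 k l hk hl
    obtain ⟨m, hm⟩ := nb_cover hh y (hR hy)
    exact RI_trans (h1 k m hk hm) (h2 m l hm hl)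
  · intro x y _ _ h1 k l hk hl
    exact RI_symm (h1 l k hl hk)

/-- cut a connected set reaching from `a` to `B` just before `B` -/
lemma prefix_cut {M B : Set (ℕ × ℕ)} {a b : ℕ × ℕ} (ha : a ∉ B) (haM : a ∈ M) (hb : b ∈ B)
    (hr : RI M a b) : ∃ Q : Set (ℕ × ℕ), a ∈ Q ∧ Q ⊆ M ∧ (∀ x ∈ Q, x ∉ B) ∧
      (∀ x ∈ Q, RI Q a x) ∧ ∃ q ∈ Q, ∃ b' ∈ B, gadj q b' := by
  refine ⟨{x | RI (M \ B) a x}, Relation.ReflTransGen.refl, ?_, ?_, ?_, ?_⟩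
  · intro x hx
    rcases Relation.ReflTransGen.cases_tail hx with rfl | ⟨c, _, hc⟩
    · exact haM
    · exact hc.2.1.1
  · intro x hx
    rcases Relation.ReflTransGen.cases_tail hx with rfl | ⟨c, _, hc⟩
    · exact ha
    · exact hc.2.1.2
  · intro x hx
    induction (show RI (M \ B) a x from hx) with
    | refl => exact Relation.ReflTransGen.refl
    | @tail c d hac hcd ih =>
      exact Relation.ReflTransGen.tail (ih hac)
        ⟨hac, Relation.ReflTransGen.tail hac hcd, hcd.2.2⟩
  · by_contra hcon
    push Not at hcon
    have : ∀ x, RI M a x → RI (M \ B) a x := by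
      intro x hx
      induction hx with
      | refl => exact Relation.ReflTransGen.refl
      | @tail c d hac hcd ih =>
        have hdB : d ∉ B := fun hd => hcon c ih d hd hcd.2.2
        have hcB : c ∉ B := by
          rcases Relation.ReflTransGen.cases_tail ih with rfl | ⟨e, _, hc⟩
          · exact ha
          · exact hc.2.1.2
        exact Relation.ReflTransGen.tail ih ⟨⟨hcd.1, hcB⟩, ⟨hcd.2.1, hdB⟩, hcd.2.2⟩
    rcases Relation.ReflTransGen.cases_tail (this b hr) with rfl | ⟨e, _, hc⟩
    · exact ha hb
    · exact hc.2.1.2 hb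

lemma exists_scale {J : Type*} [Finite J] (A : J → Set (ℝ × ℝ)) (hA : ∀ j, IsCompact (A j)) :
    ∃ R h : ℝ, 0 < h ∧ (∀ j, A j ⊆ Metric.ball 0 R) ∧
      ∀ i j, Disjoint (A i) (A j) → Disjoint (nb R h (A i)) (nb R h (A j)) := by
  obtain ⟨R, hR⟩ := (isCompact_iUnion hA).isBounded.subset_ball 0
  have hev : ∀ᶠ h : ℝ in nhdsWithin 0 (Ioi 0), ∀ i j, Disjoint (A i) (A j) →
      Disjoint (Metric.thickening h (A i)) (Metric.thickening h (A j)) := by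
    rw [Filter.eventually_all]; intro i
    rw [Filter.eventually_all]; intro j
    by_cases hd : Disjoint (A i) (A j)
    · obtain ⟨δ, hδ, hdis⟩ := hd.exists_thickenings (hA i) (hA j).isClosed
      filter_upwards [Ioo_mem_nhdsGT hδ] with h hh _
      exact hdis.mono (Metric.thickening_mono hh.2.le _) (Metric.thickening_mono hh.2.le _)
    · simp [hd]
  obtain ⟨h, hh, hpos⟩ := (hev.and self_mem_nhdsWithin).exists
  refine ⟨R, h, hpos, fun j => (subset_iUnion A j).trans hR, fun i j hd => ?_⟩
  rw [Set.disjoint_left]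
  rintro k ⟨a, ha, hka⟩ ⟨b, hb, hkb⟩
  refine (Set.disjoint_left.1 (hh i j hd) : ∀ ⦃a⦄, _ → _ → False) (?_ : pt R h k ∈ _) ?_
  · exact Metric.mem_thickening_iff.2 ⟨a, ha, by rwa [dist_comm]⟩
  · exact Metric.mem_thickening_iff.2 ⟨b, hb, by rwa [dist_comm]⟩

lemma nb_box {R h : ℝ} (hh : 0 < h) : ∃ N : ℕ, ∀ A ⊆ Metric.ball (0 : ℝ × ℝ) R,
    ∀ x ∈ nb R h A, x.1 < N ∧ x.2 < N := by
  obtain ⟨N, hN⟩ := exists_nat_gt ((2 * R + h) / h)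
  rw [div_lt_iff₀ hh] at hN
  refine ⟨N, ?_⟩
  rintro A hA x ⟨a, ha, hx⟩
  have h1 := hA ha
  rw [Metric.mem_ball, Prod.dist_eq, max_lt_iff, Real.dist_eq, Real.dist_eq] at h1
  simp only [Prod.fst_zero, Prod.snd_zero, sub_zero, abs_lt] at h1
  have h2 := dist_pt.1 hx
  rw [abs_lt, abs_lt] at h2
  constructor
  · have : (x.1 : ℝ) * h < N * h := by linarith
    exact_mod_cast lt_of_mul_lt_mul_right this hh.le
  · have : (x.2 : ℝ) * h < N * h := by linarith
    exact_mod_cast lt_of_mul_lt_mul_right this hh.le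

lemma discretize {V : Type*} [Fintype V] (G : SimpleGraph V) (C : V → Set (ℝ × ℝ))
    (M : Sym2 V → Set (ℝ × ℝ)) (hCc : ∀ v, IsCompact (C v)) (hCp : ∀ v, IsPreconnected (C v))
    (hCn : ∀ v, (C v).Nonempty)
    (hMc : ∀ e ∈ G.edgeSet, IsCompact (M e)) (hMp : ∀ e ∈ G.edgeSet, IsPreconnected (M e))
    (hCC : ∀ u v, u ≠ v → Disjoint (C u) (C v))
    (hMC : ∀ e ∈ G.edgeSet, ∀ u, u ∉ e → Disjoint (M e) (C u))
    (hMM : ∀ e ∈ G.edgeSet, ∀ f ∈ G.edgeSet, e ≠ f → Disjoint (M e) (M f))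
    (hMI : ∀ e ∈ G.edgeSet, ∀ u ∈ e, (M e ∩ C u).Nonempty) :
    ∃ (T : V → Set (ℕ × ℕ)) (N : ℕ) (ε : Sym2 V → Sym2 (ℕ × ℕ)),
      (∀ v, (T v).Nonempty) ∧ (∀ u v x, x ∈ T u → x ∈ T v → u = v) ∧
      (∀ v, ∀ x ∈ T v, ∀ y ∈ T v, RI (T v) x y) ∧
      (∀ v, ∀ x ∈ T v, x.1 < N ∧ x.2 < N) ∧
      (∀ e ∈ G.edgeSet, ∃ u v x y, e = s(u, v) ∧ x ∈ T u ∧ y ∈ T v ∧ gadj x y ∧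
        ε e = s(x, y)) := by
  classical
  let A : V ⊕ G.edgeSet → Set (ℝ × ℝ) := Sum.elim C (fun e => M e)
  obtain ⟨R, h, hh, hR, hdis⟩ := exists_scale A (by
    rintro (v | e)
    · exact hCc v
    · exact hMc e e.2)
  obtain ⟨N, hN⟩ := nb_box (R := R) hh
  have nCC : ∀ u v x, x ∈ nb R h (C u) → x ∈ nb R h (C v) → u = v := by
    intro u v x hu hv
    by_contra hne
    exact Set.disjoint_left.1 (hdis (.inl u) (.inl v) (hCC u v hne)) hu hv
  have nMC : ∀ e ∈ G.edgeSet, ∀ u x, x ∈ nb R h (M e) → x ∈ nb R h (C u) → u ∈ e := by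
    intro e he u x hu hv
    by_contra hne
    exact Set.disjoint_left.1 (hdis (.inr ⟨e, he⟩) (.inl u) (hMC e he u hne)) hu hv
  have nMM : ∀ e ∈ G.edgeSet, ∀ f ∈ G.edgeSet, ∀ x, x ∈ nb R h (M e) → x ∈ nb R h (M f) →
      e = f := by
    intro e he f hf x hu hv
    by_contra hne
    exact Set.disjoint_left.1 (hdis (.inr ⟨e, he⟩) (.inr ⟨f, hf⟩) (hMM e he f hf hne)) hu hv
  have hRC : ∀ v, C v ⊆ Metric.ball 0 R := fun v => hR (.inl v)
  have hRM : ∀ e ∈ G.edgeSet, M e ⊆ Metric.ball 0 R := fun e he => hR (.inr ⟨e, he⟩)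
  have hout : ∀ e : Sym2 V, e = s((Quot.out e).1, (Quot.out e).2) := fun e => (Quot.out_eq e).symm
  have hcut : ∀ e : G.edgeSet, ∃ (a : ℕ × ℕ) (Q : Set (ℕ × ℕ)), a ∈ nb R h (C (Quot.out e.1).1) ∧ a ∈ Q ∧
      Q ⊆ nb R h (M e) ∧ (∀ x ∈ Q, x ∉ nb R h (C (Quot.out e.1).2)) ∧ (∀ x ∈ Q, RI Q a x) ∧
      ∃ q ∈ Q, ∃ b' ∈ nb R h (C (Quot.out e.1).2), gadj q b' := by
    rintro ⟨e, he⟩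
    have h1 : (Quot.out e).1 ∈ e := by
      have := Sym2.mem_mk_left (Quot.out e).1 (Quot.out e).2
      rwa [← hout e] at this
    have h2 : (Quot.out e).2 ∈ e := by
      have := Sym2.mem_mk_right (Quot.out e).1 (Quot.out e).2
      rwa [← hout e] at this
    have hne : (Quot.out e).1 ≠ (Quot.out e).2 := by
      have he' := he
      rw [hout e] at he'
      exact G.ne_of_adj he'
    obtain ⟨p, hp1, hp2⟩ := hMI e he _ h1
    obtain ⟨r, hr1, hr2⟩ := hMI e he _ h2
    obtain ⟨a, ha⟩ := nb_cover hh p (hRM e he hp1)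
    obtain ⟨b, hb⟩ := nb_cover hh r (hRM e he hr1)
    have haC : a ∈ nb R h (C (Quot.out e).1) := ⟨p, hp2, ha⟩
    obtain ⟨Q, hQ⟩ := prefix_cut (M := nb R h (M e)) (B := nb R h (C (Quot.out e).2))
      (a := a) (b := b) (fun h' => hne (nCC _ _ _ haC h')) ⟨p, hp1, ha⟩ ⟨r, hr2, hb⟩
      (nb_conn hh (hMp e he) (hRM e he) _ ⟨p, hp1, ha⟩ _ ⟨r, hr1, hb⟩)
    exact ⟨a, Q, haC, hQ⟩
  choose a Q haC haQ hQM hQB hQr q hq b hb hg using hcut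
  let T : V → Set (ℕ × ℕ) := fun v => nb R h (C v) ∪
    {x | ∃ e : G.edgeSet, (Quot.out e.1).1 = v ∧ x ∈ Q e}
  have hQC : ∀ (e : G.edgeSet) v x, x ∈ Q e → x ∈ nb R h (C v) → (Quot.out e.1).1 = v := by
    intro e v x hx hv
    have := nMC e e.2 v x (hQM e hx) hv
    rw [hout e.1, Sym2.mem_iff] at this
    rcases this with rfl | rfl
    · rfl
    · exact absurd hv (hQB e x hx)
  refine ⟨T, N, fun e => if he : e ∈ G.edgeSet then s(q ⟨e, he⟩, b ⟨e, he⟩) else s((0, 0), (0, 0)),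
    ?_, ?_, ?_, ?_, ?_⟩
  · intro v
    obtain ⟨p, hp⟩ := hCn v
    obtain ⟨k, hk⟩ := nb_cover hh p (hRC v hp)
    exact ⟨k, Or.inl ⟨p, hp, hk⟩⟩
  · rintro u v x (hu | ⟨e, rfl, hu⟩) (hv | ⟨f, rfl, hv⟩)
    · exact nCC _ _ _ hu hv
    · exact (hQC f u x hv hu).symm
    · exact hQC e v x hu hv
    · have := nMM e e.2 f f.2 x (hQM e hu) (hQM f hv)
      rw [this]
  · intro v
    have key : ∀ x ∈ T v, ∃ c ∈ nb R h (C v), RI (T v) x c := by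
      rintro x (hx | ⟨e, rfl, hx⟩)
      · exact ⟨x, hx, Relation.ReflTransGen.refl⟩
      · exact ⟨a e, haC e, RI_symm (RI_mono (fun y hy => Or.inr ⟨e, rfl, hy⟩) (hQr e x hx))⟩
    intro x hx y hy
    obtain ⟨c, hc, hxc⟩ := key x hx
    obtain ⟨d, hd, hyd⟩ := key y hy
    exact RI_trans hxc (RI_trans (RI_mono subset_union_left
      (nb_conn hh (hCp v) (hRC v) c hc d hd)) (RI_symm hyd))
  · rintro v x (hx | ⟨e, rfl, hx⟩)
    · exact hN _ (hRC v) x hx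
    · exact hN _ (hRM e e.2) x (hQM e hx)
  · intro e he
    exact ⟨_, _, q ⟨e, he⟩, b ⟨e, he⟩, hout e, Or.inr ⟨⟨e, he⟩, rfl, hq ⟨e, he⟩⟩,
      Or.inl (hb ⟨e, he⟩), hg ⟨e, he⟩, by simp [he]⟩

end ICP


namespace ICP

variable {V : Type*} {G : SimpleGraph V}

/-- interior of an edge -/
noncomputable def intr (D : ICDrawing G) (e : Sym2 V) : Set (ℝ × ℝ) :=
  D.arc (Quot.out e).1 (Quot.out e).2 '' Ioo 0 1

lemma arc_swap_Ioo (D : ICDrawing G) (u v : V) :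
    D.arc u v '' Ioo 0 1 = D.arc v u '' Ioo 0 1 := by
  have : ∀ u v, D.arc u v '' Ioo 0 1 ⊆ D.arc v u '' Ioo 0 1 := by
    rintro u v _ ⟨t, ht, rfl⟩
    exact ⟨1 - t, ⟨by linarith [ht.2], by linarith [ht.1]⟩, (D.arc_symm u v t).symm⟩
  exact (this u v).antisymm (this v u)

lemma out_eq (e : Sym2 V) : e = s((Quot.out e).1, (Quot.out e).2) := (Quot.out_eq e).symm

lemma intr_mk (D : ICDrawing G) (u v : V) : intr D s(u, v) = D.arc u v '' Ioo 0 1 := by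
  have h := out_eq s(u, v)
  unfold intr
  rw [Sym2.eq_iff] at h
  rcases h with ⟨h1, h2⟩ | ⟨h1, h2⟩
  · rw [← h1, ← h2]
  · rw [← h1, ← h2, arc_swap_Ioo]

open Classical in
lemma planar_bound [Fintype V] [Nonempty V] (D : ICDrawing G) (H : SimpleGraph V) (hHG : H ≤ G)
    (hd : ∀ e ∈ H.edgeSet, ∀ f ∈ H.edgeSet, e ≠ f → Disjoint (intr D e) (intr D f))
    (g : ℕ) (hg : (g : ℕ∞) ≤ H.egirth) :
    g * (H.edgeFinset.card + 1) ≤ 2 * H.edgeFinset.card + g * Fintype.card V := by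
  let C : V → Set (ℝ × ℝ) := fun u =>
    {D.pos u} ∪ ⋃ (w : V), ⋃ (_ : H.Adj u w), D.arc u w '' Icc 0 (1 / 3)
  let M : Sym2 V → Set (ℝ × ℝ) := fun e =>
    D.arc (Quot.out e).1 (Quot.out e).2 '' Icc (1 / 3) (2 / 3)
  have hadj : ∀ e ∈ H.edgeSet, H.Adj (Quot.out e).1 (Quot.out e).2 := by
    intro e he
    rw [out_eq e] at he
    exact he
  have hsub1 : Icc (0 : ℝ) (1 / 3) ⊆ Icc 0 1 := Icc_subset_Icc_right (by norm_num)
  have hsub2 : Icc (1 / 3 : ℝ) (2 / 3) ⊆ Icc 0 1 := Icc_subset_Icc (by norm_num) (by norm_num)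
  have hMint : ∀ e, M e ⊆ intr D e := by
    rintro e _ ⟨t, ht, rfl⟩
    exact ⟨t, ⟨by linarith [ht.1], by linarith [ht.2]⟩, rfl⟩
  have hCmem : ∀ u p, p ∈ C u → p = D.pos u ∨ ∃ w, H.Adj u w ∧ ∃ t, 0 < t ∧ t ≤ 1 / 3 ∧
      D.arc u w t = p ∧ p ∈ intr D s(u, w) := by
    rintro u p (hp | hp)
    · exact Or.inl hp
    · simp only [mem_iUnion] at hp
      obtain ⟨w, hw, t, ht, rfl⟩ := hp
      rcases ht.1.eq_or_lt with h0 | h0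
      · left; rw [← h0]; exact D.arc_start u w (hHG hw)
      · right
        refine ⟨w, hw, t, h0, ht.2, rfl, ?_⟩
        rw [intr_mk]
        exact ⟨t, ⟨h0, by linarith [ht.2]⟩, rfl⟩
  have hpos_int : ∀ e ∈ H.edgeSet, ∀ u, D.pos u ∉ intr D e := by
    rintro e he u ⟨t, ht, h⟩
    exact D.arc_avoid _ _ (hHG (hadj e he)) t ht u h
  have hstart : ∀ u w, H.Adj u w → D.pos u ∈ D.arc u w '' Icc 0 (1 / 3) := fun u w huw =>
    ⟨0, ⟨le_rfl, by norm_num⟩, D.arc_start u w (hHG huw)⟩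
  refine Exists.elim (discretize H C M ?_ ?_ ?_ ?_ ?_ ?_ ?_ ?_ ?_) ?_
  · intro v
    refine isCompact_singleton.union (isCompact_iUnion fun w => isCompact_iUnion fun hw => ?_)
    exact isCompact_Icc.image_of_continuousOn ((D.arc_cont v w (hHG hw)).mono hsub1)
  · intro v
    refine isPreconnected_of_forall (D.pos v) fun y hy => ?_
    rcases hy with hy | hy
    · exact ⟨{D.pos v}, subset_union_left, rfl, hy, isPreconnected_singleton⟩
    · simp only [mem_iUnion] at hy
      obtain ⟨w, hw, hy⟩ := hy
      refine ⟨D.arc v w '' Icc 0 (1 / 3), ?_, hstart v w hw, hy,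
        isPreconnected_Icc.image _ ((D.arc_cont v w (hHG hw)).mono hsub1)⟩
      intro p hp
      refine Or.inr ?_
      simp only [mem_iUnion]
      exact ⟨w, hw, hp⟩
  · exact fun v => ⟨D.pos v, Or.inl rfl⟩
  · intro e he
    exact isCompact_Icc.image_of_continuousOn ((D.arc_cont _ _ (hHG (hadj e he))).mono hsub2)
  · intro e he
    exact isPreconnected_Icc.image _ ((D.arc_cont _ _ (hHG (hadj e he))).mono hsub2)
  · intro u v huv
    rw [Set.disjoint_left]
    intro p hpu hpv
    rcases hCmem u p hpu with rfl | ⟨w, hw, t, ht0, ht1, htp, hti⟩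
    · rcases hCmem v _ hpv with h | ⟨x, hx, s, hs0, hs1, hsp, hsi⟩
      · exact huv (D.pos_inj h)
      · exact hpos_int _ hx u hsi
    · rcases hCmem v _ hpv with rfl | ⟨x, hx, s, hs0, hs1, hsp, hsi⟩
      · exact hpos_int _ hw v hti
      · by_cases heq : s(u, w) = s(v, x)
        · rw [Sym2.eq_iff] at heq
          rcases heq with ⟨h, _⟩ | ⟨rfl, rfl⟩
          · exact huv h
          · rw [D.arc_symm, ← htp] at hsp
            have := D.arc_inj _ _ (hHG hw) (x₁ := 1 - s) (x₂ := t)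
              ⟨by linarith, by linarith⟩ ⟨by linarith, by linarith⟩ hsp
            linarith
        · exact Set.disjoint_left.1 (hd _ hw _ hx heq) hti hsi
  · intro e he u hu
    rw [Set.disjoint_left]
    intro p hp hpu
    have hpe := hMint e hp
    rcases hCmem u p hpu with rfl | ⟨w, hw, t, ht0, ht1, htp, hti⟩
    · exact hpos_int e he u hpe
    · have hne : e ≠ s(u, w) := by
        rintro rfl
        exact hu (Sym2.mem_mk_left _ _)
      exact Set.disjoint_left.1 (hd _ he _ hw hne) hpe hti
  · intro e he f hf hne
    exact (hd e he f hf hne).mono (hMint e) (hMint f)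
  · intro e he u hu
    have ha := hadj e he
    rw [out_eq e, Sym2.mem_iff] at hu
    rcases hu with rfl | rfl
    · refine ⟨D.arc (Quot.out e).1 (Quot.out e).2 (1 / 3), ⟨1 / 3, ⟨le_rfl, by norm_num⟩, rfl⟩, ?_⟩
      refine Or.inr ?_
      simp only [mem_iUnion]
      exact ⟨_, ha, 1 / 3, ⟨by norm_num, le_rfl⟩, rfl⟩
    · refine ⟨D.arc (Quot.out e).1 (Quot.out e).2 (2 / 3), ⟨2 / 3, ⟨by norm_num, le_rfl⟩, rfl⟩, ?_⟩
      refine Or.inr ?_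
      simp only [mem_iUnion]
      refine ⟨_, ha.symm, 1 / 3, ⟨by norm_num, le_rfl⟩, ?_⟩
      rw [D.arc_symm]; norm_num
  · rintro T ⟨N, ε, h1, h2, h3, h4, h5⟩
    obtain ⟨Y, hY2, hY⟩ := minor_basis H T h1 h2 h3 N h4 ε h5
    exact count H g hg Y hY2 hY

lemma cross_unique' (D : ICDrawing G) {e f f' : Sym2 V} (he : e ∈ G.edgeSet) (hf : f ∈ G.edgeSet)
    (hf' : f' ∈ G.edgeSet) (h1 : e ≠ f) (h2 : e ≠ f') (h3 : (intr D e ∩ intr D f).Nonempty)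
    (h4 : (intr D e ∩ intr D f').Nonempty) : f = f' := by
  induction e using Sym2.ind with
  | _ u v =>
  induction f using Sym2.ind with
  | _ x y =>
  induction f' using Sym2.ind with
  | _ x' y' =>
  simp only [intr_mk] at h3 h4
  exact D.cross_unique u v x y x' y' he hf hf' h1 h2 h3 h4

lemma ic' (D : ICDrawing G) {e f e' f' : Sym2 V} (he : e ∈ G.edgeSet) (hf : f ∈ G.edgeSet)
    (he' : e' ∈ G.edgeSet) (hf' : f' ∈ G.edgeSet) (h1 : e ≠ f) (h2 : e' ≠ f')
    (h3 : (intr D e ∩ intr D f).Nonempty) (h4 : (intr D e' ∩ intr D f').Nonempty)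
    (h5 : ({e, f} : Set (Sym2 V)) ≠ {e', f'}) (w : V) (hw : w ∈ e ∨ w ∈ f)
    (hw' : w ∈ e' ∨ w ∈ f') : False := by
  induction e using Sym2.ind with
  | _ u v =>
  induction f using Sym2.ind with
  | _ x y =>
  induction e' using Sym2.ind with
  | _ u' v' =>
  induction f' using Sym2.ind with
  | _ x' y' =>
  simp only [intr_mk] at h3 h4
  have := D.ic u v x y u' v' x' y' he hf he' hf' h1 h2 h3 h4 h5
  have hm : w ∈ ({u, v, x, y} : Set V) ∩ {u', v', x', y'} := by
    simp only [Sym2.mem_iff] at hw hw'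
    simp only [mem_inter_iff, mem_insert_iff, mem_singleton_iff]
    tauto
  rw [this] at hm
  exact hm

open Classical in
/-- an IC-planar graph has a plane subgraph missing few edges -/
lemma ic_bound [Fintype V] [Nonempty V] (D : ICDrawing G) (g : ℕ) (hg : (g : ℕ∞) ≤ G.egirth) :
    ∃ m r : ℕ, G.edgeFinset.card = m + r ∧ 3 * r ≤ Fintype.card V ∧
      g * (m + 1) ≤ 2 * m + g * Fintype.card V := by
  let idx := Fintype.equivFin (Sym2 V)
  let R : Finset (Sym2 V) := G.edgeFinset.filter fun e =>
    ∃ f ∈ G.edgeSet, (intr D e ∩ intr D f).Nonempty ∧ idx e < idx f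
  have hRG : R ⊆ G.edgeFinset := Finset.filter_subset _ _
  let H := G.deleteEdges (R : Set (Sym2 V))
  have hHG : H ≤ G := SimpleGraph.deleteEdges_le _
  have hHe : H.edgeFinset = G.edgeFinset \ R := by
    ext e; simp [H]
  have hpl := planar_bound D H hHG (by
    intro e he f hf hne
    rw [Set.disjoint_iff_inter_eq_empty]
    by_contra hcr
    have hcr := Set.nonempty_iff_ne_empty.2 hcr
    simp only [H, SimpleGraph.edgeSet_deleteEdges] at he hf
    rcases lt_or_gt_of_ne (fun h => hne (idx.injective h)) with hlt | hlt
    · apply he.2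
      simp only [R, Finset.coe_filter, SimpleGraph.mem_edgeFinset]
      exact ⟨he.1, f, hf.1, hcr, hlt⟩
    · apply hf.2
      simp only [R, Finset.coe_filter, SimpleGraph.mem_edgeFinset]
      exact ⟨hf.1, e, he.1, by rwa [Set.inter_comm], hlt⟩) g (hg.trans (SimpleGraph.egirth_anti hHG))
  refine ⟨H.edgeFinset.card, R.card, ?_, ?_, by convert hpl⟩
  · rw [hHe, Finset.card_sdiff_add_card_eq_card hRG]
  have hR : ∀ e, ∃ f, e ∈ R → e ∈ G.edgeSet ∧ f ∈ G.edgeSet ∧ (intr D e ∩ intr D f).Nonempty ∧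
      idx e < idx f := by
    intro e
    by_cases he : e ∈ R
    · have he' := he
      simp only [R, Finset.mem_filter, SimpleGraph.mem_edgeFinset] at he'
      obtain ⟨h1, f, h2⟩ := he'
      exact ⟨f, fun _ => ⟨h1, h2⟩⟩
    · exact ⟨e, fun h => absurd h he⟩
  choose F hF using hR
  have hne : ∀ e ∈ R, e ≠ F e := by
    intro e he h
    have := (hF e he).2.2.2
    rw [← h] at this
    exact lt_irrefl _ this
  let cl : Sym2 V → Finset V := fun e => e.toFinset ∪ (F e).toFinset
  have hdisj : (R : Set (Sym2 V)).PairwiseDisjoint cl := by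
    intro e he e' he' hee
    change Disjoint (cl e) (cl e')
    rw [Finset.disjoint_left]
    intro w hw hw'
    simp only [cl, Finset.mem_union, Sym2.mem_toFinset] at hw hw'
    have a := hF e he
    have b := hF e' he'
    refine ic' D a.1 a.2.1 b.1 b.2.1 (hne e he) (hne e' he') a.2.2.1 b.2.2.1 ?_ w hw hw'
    intro hs
    have h1 : e ∈ ({e', F e'} : Set (Sym2 V)) := hs ▸ (by simp)
    have h2 : e' ∈ ({e, F e} : Set (Sym2 V)) := hs ▸ (by simp)
    simp only [mem_insert_iff, mem_singleton_iff] at h1 h2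
    rcases h1 with h1 | h1
    · exact hee h1
    rcases h2 with h2 | h2
    · exact hee h2.symm
    have c := a.2.2.2
    have d := b.2.2.2
    rw [← h2] at c
    rw [← h1] at d
    exact lt_asymm c d
  have hcard : ∀ e ∈ R, 3 ≤ (cl e).card := by
    intro e he
    have a := hF e he
    have c1 := Sym2.card_toFinset_of_not_isDiag e (G.not_isDiag_of_mem_edgeSet a.1)
    have c2 := Sym2.card_toFinset_of_not_isDiag (F e) (G.not_isDiag_of_mem_edgeSet a.2.1)
    by_contra hlt
    push Not at hlt
    have s1 : e.toFinset = cl e := Finset.eq_of_subset_of_card_le Finset.subset_union_left (by omega)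
    have s2 : (F e).toFinset = cl e :=
      Finset.eq_of_subset_of_card_le Finset.subset_union_right (by omega)
    apply hne e he
    refine Sym2.ext fun x => ?_
    rw [← Sym2.mem_toFinset, ← Sym2.mem_toFinset, s1, s2]
  have h1 := Finset.card_biUnion hdisj
  have h2 : R.card • 3 ≤ ∑ e ∈ R, (cl e).card := Finset.card_nsmul_le_sum _ _ _ hcard
  have h3 := Finset.card_le_univ (R.biUnion cl)
  simp only [smul_eq_mul] at h2
  omega

end ICP


/-- Every IC-planar graph has minimum degree at most 6; with girth at least 4, at most 4;
with girth at least 5, at most 3. -/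
theorem ic_planar_min_degree {V : Type*} [Fintype V] [Nonempty V] (G : SimpleGraph V)
    [DecidableRel G.Adj] (hic : G.ICPlanar) :
    G.minDegree ≤ 6 ∧
    ((4 : ℕ∞) ≤ G.egirth → G.minDegree ≤ 4) ∧
    ((5 : ℕ∞) ≤ G.egirth → G.minDegree ≤ 3) := by

  obtain ⟨D⟩ := hic
  have hdeg : Fintype.card V * G.minDegree ≤ 2 * G.edgeFinset.card := by
    rw [← G.sum_degrees_eq_twice_card_edges, ← smul_eq_mul]
    exact Finset.card_nsmul_le_sum _ _ _ fun v _ => G.minDegree_le_degree v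
  have hn : 0 < Fintype.card V := Fintype.card_pos
  have key : ∀ g : ℕ, (g : ℕ∞) ≤ G.egirth → ∃ m r : ℕ, G.edgeFinset.card = m + r ∧
      3 * r ≤ Fintype.card V ∧ g * (m + 1) ≤ 2 * m + g * Fintype.card V := by
    intro g hg
    obtain ⟨m, r, h1, h2⟩ := ICP.ic_bound D g hg
    exact ⟨m, r, by rw [← h1]; congr!, h2⟩
  refine ⟨?_, fun hg => ?_, fun hg => ?_⟩
  · obtain ⟨m, r, h1, h2, h3⟩ := key 3 (by exact_mod_cast G.three_le_egirth)
    by_contra hc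
    have := Nat.mul_le_mul_left (Fintype.card V) (show 7 ≤ G.minDegree by omega)
    omega
  · obtain ⟨m, r, h1, h2, h3⟩ := key 4 (by exact_mod_cast hg)
    by_contra hc
    have := Nat.mul_le_mul_left (Fintype.card V) (show 5 ≤ G.minDegree by omega)
    omega
  · obtain ⟨m, r, h1, h2, h3⟩ := key 5 (by exact_mod_cast hg)
    by_contra hc
    have := Nat.mul_le_mul_left (Fintype.card V) (show 4 ≤ G.minDegree by omega)
    omega
end

section
/- The complete graph K₆ is not IC-planar; equivalently, if a vertex z of an IC-plane graph has 5 neighbors that are pairwise adjacent, then together with z they induce a K₆, which is impossible. Hence in any IC-plane graph, every vertex with at least 5 neighbors in a set S has two neighbors in S that are nonadjacent. -/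
open Set

namespace K6IC

/-- a continuous nowhere vanishing function on a simply connected space has a continuous log -/
lemma exists_log {A : Type*} [TopologicalSpace A] [SimplyConnectedSpace A]
    [LocallyPathConnectedSpace A] (a₀ : A) (F : A → ℂ) (hF : Continuous F) (h0 : ∀ a, F a ≠ 0) :
    ∃ L : A → ℂ, Continuous L ∧ ∀ a, Complex.exp (L a) = F a := by
  obtain ⟨L, ⟨_, hL⟩, _⟩ := Complex.isCoveringMap_exp.existsUnique_continuousMap_lifts
    (A := A) ⟨fun a => ⟨F a, h0 a⟩, by fun_prop⟩ a₀ (Complex.log (F a₀))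
    (Subtype.ext (Complex.exp_log (h0 a₀)))
  exact ⟨L, L.continuous, fun a => congrArg Subtype.val (congrFun hL a)⟩

lemma log_incr (L M : ℝ → ℂ) (hL : Continuous L) (hM : Continuous M)
    (h : ∀ t, Complex.exp (L t) = Complex.exp (M t)) : L 1 - L 0 = M 1 - M 0 := by
  have key : L = fun t => M t + (L 0 - M 0) := by
    refine Complex.isCoveringMap_exp.eq_of_comp_eq hL (by fun_prop) ?_ 0 (by simp)
    funext t
    apply Subtype.ext
    have := h 0
    simp [Complex.exp_add, Complex.exp_sub, h]
  have := congrFun key 1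
  rw [this]; ring

/-- the increment of logs along the boundary of a square -/
lemma square (e f : ℝ → ℂ) (he : Continuous e) (hf : Continuous f) (hne : ∀ s t, e s ≠ f t)
    (La Lb Lc Ld : ℝ → ℂ) (ha : Continuous La) (hb : Continuous Lb) (hc : Continuous Lc)
    (hd : Continuous Ld)
    (ea : ∀ t, Complex.exp (La t) = e 0 - f t) (eb : ∀ t, Complex.exp (Lb t) = e 1 - f t)
    (ec : ∀ t, Complex.exp (Lc t) = f 0 - e t) (ed : ∀ t, Complex.exp (Ld t) = f 1 - e t) :
    (La 1 - La 0) + (Ld 1 - Ld 0) = (Lb 1 - Lb 0) + (Lc 1 - Lc 0) := by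
  obtain ⟨L, hL, eL⟩ := exists_log (A := ℝ × ℝ) (0, 0) (fun p => e p.1 - f p.2) (by fun_prop)
    (fun p => sub_ne_zero.2 (hne _ _))
  have h1 := log_incr La (fun t => L (0, t)) ha (by fun_prop) (by intro t; simp [ea, eL])
  have h2 := log_incr Lb (fun t => L (1, t)) hb (by fun_prop) (by intro t; simp [eb, eL])
  have h3 := log_incr Lc (fun t => L (t, 0) + Real.pi * Complex.I) hc (by fun_prop)
    (by intro t; simp [ec, eL, Complex.exp_add])
  have h4 := log_incr Ld (fun t => L (t, 1) + Real.pi * Complex.I) hd (by fun_prop)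
    (by intro t; simp [ed, eL, Complex.exp_add])
  rw [h1, h2, h3, h4]; ring

/-- antisymmetric choice of logs of differences -/
lemma exists_alpha (p : Fin 3 → ℂ) (hp : ∀ i j, i ≠ j → p i ≠ p j) :
    ∃ α : Fin 3 → Fin 3 → ℂ, (∀ i j, i ≠ j → Complex.exp (α i j) = p i - p j) ∧
      ∀ i j, i < j → α j i = α i j + Real.pi * Complex.I := by
  refine ⟨fun i j => if i < j then Complex.log (p i - p j) else
    Complex.log (p j - p i) + Real.pi * Complex.I, ?_, ?_⟩
  · intro i j hij
    dsimp only
    split_ifs with h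
    · exact Complex.exp_log (sub_ne_zero.2 (hp _ _ hij))
    · rw [Complex.exp_add, Complex.exp_log (sub_ne_zero.2 (hp _ _ hij.symm))]; simp
  · intro i j h
    simp [h, h.not_gt]

lemma incr_int (L : ℝ → ℂ) (a b : ℂ) (h0 : Complex.exp (L 0) = Complex.exp a)
    (h1 : Complex.exp (L 1) = Complex.exp b) :
    ∃ n : ℤ, L 1 - L 0 = b - a + n * (2 * Real.pi * Complex.I) := by
  obtain ⟨k, hk⟩ := Complex.exp_eq_exp_iff_exists_int.1 h0
  obtain ⟨l, hl⟩ := Complex.exp_eq_exp_iff_exists_int.1 h1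
  exact ⟨l - k, by rw [hk, hl]; push_cast; ring⟩

/-- `K_{3,3}` has no drawing in which independent edges are disjoint. -/
theorem k33 (pA pB : Fin 3 → ℂ) (e : Fin 3 → Fin 3 → ℝ → ℂ)
    (hc : ∀ i j, Continuous (e i j)) (h0 : ∀ i j, e i j 0 = pA i) (h1 : ∀ i j, e i j 1 = pB j)
    (hne : ∀ i i' j j', i ≠ i' → j ≠ j' → ∀ s t, e i j s ≠ e i' j' t) : False := by
  have ex : ∀ i : Fin 3, ∃ i', i' ≠ i := by decide
  have hAA : ∀ i j, i ≠ j → pA i ≠ pA j := by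
    intro i j hij
    rw [← h0 i 0, ← h0 j 1]; exact hne _ _ _ _ hij (by decide) _ _
  have hBB : ∀ i j, i ≠ j → pB i ≠ pB j := by
    intro i j hij
    rw [← h1 0 i, ← h1 1 j]; exact hne _ _ _ _ (by decide) hij _ _
  have hA : ∀ i i' j', i ≠ i' → ∀ t, pA i ≠ e i' j' t := by
    intro i i' j' h t
    obtain ⟨j, hj⟩ := ex j'
    rw [← h0 i j]; exact hne _ _ _ _ h hj _ _
  have hB : ∀ j i' j', j ≠ j' → ∀ t, pB j ≠ e i' j' t := by
    intro j i' j' h t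
    obtain ⟨i, hi⟩ := ex i'
    rw [← h1 i j]; exact hne _ _ _ _ hi h _ _
  have hAB : ∀ i j, pA i ≠ pB j := by
    intro i j
    obtain ⟨i', hi⟩ := ex i
    rw [← h1 i' j]; exact hA _ _ _ hi.symm _
  obtain ⟨αA, eA, sA⟩ := exists_alpha pA hAA
  obtain ⟨αB, eB, sB⟩ := exists_alpha pB hBB
  have eAB : ∀ i j, Complex.exp (Complex.log (pA i - pB j)) = pA i - pB j := fun i j =>
    Complex.exp_log (sub_ne_zero.2 (hAB i j))
  have eBA : ∀ i j, Complex.exp (Complex.log (pA i - pB j) + Real.pi * Complex.I) = pB j - pA i :=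
    fun i j => by rw [Complex.exp_add, eAB]; simp
  have LA : ∀ i i' j', ∃ (L : ℝ → ℂ) (n : ℤ), i ≠ i' → Continuous L ∧
      (∀ t, Complex.exp (L t) = pA i - e i' j' t) ∧
      L 1 - L 0 = Complex.log (pA i - pB j') - αA i i' + n * (2 * Real.pi * Complex.I) := by
    intro i i' j'
    by_cases h : i = i'
    · exact ⟨0, 0, fun h' => (h' h).elim⟩
    have := hc i' j'
    obtain ⟨L, cL, eL⟩ := exists_log (A := ℝ) 0 (fun t => pA i - e i' j' t) (by fun_prop)
      (fun t => sub_ne_zero.2 (hA _ _ _ h t))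
    obtain ⟨n, hn⟩ := incr_int L (αA i i') (Complex.log (pA i - pB j'))
      (by rw [eL, eA _ _ h, h0]) (by rw [eL, eAB, h1])
    exact ⟨L, n, fun _ => ⟨cL, eL, hn⟩⟩
  have LB : ∀ j i' j', ∃ (L : ℝ → ℂ) (n : ℤ), j ≠ j' → Continuous L ∧
      (∀ t, Complex.exp (L t) = pB j - e i' j' t) ∧
      L 1 - L 0 = αB j j' - (Complex.log (pA i' - pB j) + Real.pi * Complex.I)
        + n * (2 * Real.pi * Complex.I) := by
    intro i i' j'
    by_cases h : i = j'
    · exact ⟨0, 0, fun h' => (h' h).elim⟩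
    have := hc i' j'
    obtain ⟨L, cL, eL⟩ := exists_log (A := ℝ) 0 (fun t => pB i - e i' j' t) (by fun_prop)
      (fun t => sub_ne_zero.2 (hB _ _ _ h t))
    obtain ⟨n, hn⟩ := incr_int L (Complex.log (pA i' - pB i) + Real.pi * Complex.I) (αB i j')
      (by rw [eL, eBA, h0]) (by rw [eL, eB _ _ h, h1])
    exact ⟨L, n, fun _ => ⟨cL, eL, hn⟩⟩
  choose L n hL using LA
  choose M m hM using LB
  have hpi : (2 * Real.pi * Complex.I : ℂ) ≠ 0 := Complex.two_pi_I_ne_zero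
  have sq : ∀ i i' j j', i ≠ i' → j ≠ j' →
      (L i i' j' 1 - L i i' j' 0) + (M j' i j 1 - M j' i j 0) =
      (M j i' j' 1 - M j i' j' 0) + (L i' i j 1 - L i' i j 0) := by
    intro i i' j j' hi hj
    obtain ⟨a1, a2, -⟩ := hL i i' j' hi
    obtain ⟨b1, b2, -⟩ := hM j' i j hj.symm
    obtain ⟨c1, c2, -⟩ := hM j i' j' hj
    obtain ⟨d1, d2, -⟩ := hL i' i j hi.symm
    exact square (e i j) (e i' j') (hc _ _) (hc _ _) (hne _ _ _ _ hi hj) _ _ _ _ a1 c1 d1 b1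
      (by simpa [h0] using a2) (by simpa [h1] using c2) (by simpa [h0] using d2)
      (by simpa [h1] using b2)
  have E1 : ∀ i i' j j', i < i' → j < j' →
      n i i' j' + m j' i j - m j i' j' - n i' i j + 1 = 0 := by
    intro i i' j j' hi hj
    have := sq i i' j j' hi.ne hj.ne
    rw [(hL i i' j' hi.ne).2.2, (hM j' i j hj.ne').2.2, (hM j i' j' hj.ne).2.2,
      (hL i' i j hi.ne').2.2, sA _ _ hi, sB _ _ hj] at this
    have h : ((n i i' j' + m j' i j - m j i' j' - n i' i j + 1 : ℤ) : ℂ) *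
        (2 * Real.pi * Complex.I) = 0 := by
      push_cast
      linear_combination this
    exact_mod_cast (mul_eq_zero.1 h).resolve_right hpi
  have E2 : ∀ i i' j j', i < i' → j' < j →
      n i i' j' + m j' i j - m j i' j' - n i' i j = 0 := by
    intro i i' j j' hi hj
    have := sq i i' j j' hi.ne hj.ne'
    rw [(hL i i' j' hi.ne).2.2, (hM j' i j hj.ne).2.2, (hM j i' j' hj.ne').2.2,
      (hL i' i j hi.ne').2.2, sA _ _ hi, sB _ _ hj] at this
    have h : ((n i i' j' + m j' i j - m j i' j' - n i' i j : ℤ) : ℂ) *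
        (2 * Real.pi * Complex.I) = 0 := by
      push_cast
      linear_combination this
    exact_mod_cast (mul_eq_zero.1 h).resolve_right hpi
  have l01 : (0 : Fin 3) < 1 := by decide
  have l02 : (0 : Fin 3) < 2 := by decide
  have l12 : (1 : Fin 3) < 2 := by decide
  have a1 := E1 _ _ _ _ l01 l01
  have a2 := E1 _ _ _ _ l01 l02
  have a3 := E1 _ _ _ _ l01 l12
  have a4 := E1 _ _ _ _ l02 l01
  have a5 := E1 _ _ _ _ l02 l02
  have a6 := E1 _ _ _ _ l02 l12
  have a7 := E1 _ _ _ _ l12 l01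
  have a8 := E1 _ _ _ _ l12 l02
  have a9 := E1 _ _ _ _ l12 l12
  have b1 := E2 _ _ _ _ l01 l01
  have b2 := E2 _ _ _ _ l01 l02
  have b3 := E2 _ _ _ _ l01 l12
  have b4 := E2 _ _ _ _ l02 l01
  have b5 := E2 _ _ _ _ l02 l02
  have b6 := E2 _ _ _ _ l02 l12
  have b7 := E2 _ _ _ _ l12 l01
  have b8 := E2 _ _ _ _ l12 l02
  have b9 := E2 _ _ _ _ l12 l12
  clear E1 E2 sq hM hL
  omega

section graph

variable {V : Type*} {G : SimpleGraph V}

lemma arc_end (D : ICDrawing G) {u v : V} (h : G.Adj u v) : D.arc u v 1 = D.pos v := by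
  rw [D.arc_symm, sub_self, D.arc_start _ _ h.symm]

/-- If two edges with four distinct ends share a point, then their interiors meet. -/
lemma cross_of_eq (D : ICDrawing G) {u v x y : V} (h : G.Adj u v) (h' : G.Adj x y)
    (hux : u ≠ x) (huy : u ≠ y) (hvx : v ≠ x) (hvy : v ≠ y) {s t : ℝ} (hs : s ∈ Icc (0:ℝ) 1)
    (ht : t ∈ Icc (0:ℝ) 1) (heq : D.arc u v s = D.arc x y t) :
    (D.arc u v '' Ioo 0 1 ∩ D.arc x y '' Ioo 0 1).Nonempty := by
  have cases01 : ∀ r ∈ Icc (0:ℝ) 1, r = 0 ∨ r = 1 ∨ r ∈ Ioo (0:ℝ) 1 := by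
    rintro r ⟨h1, h2⟩
    rcases h1.eq_or_lt with h1 | h1
    · exact Or.inl h1.symm
    rcases h2.eq_or_lt with h2 | h2
    · exact Or.inr (Or.inl h2)
    exact Or.inr (Or.inr ⟨h1, h2⟩)
  rcases cases01 s hs with rfl | rfl | hs'
  · exfalso
    rw [D.arc_start _ _ h] at heq
    rcases cases01 t ht with rfl | rfl | ht'
    · rw [D.arc_start _ _ h'] at heq; exact hux (D.pos_inj heq)
    · rw [arc_end D h'] at heq; exact huy (D.pos_inj heq)
    · exact D.arc_avoid _ _ h' _ ht' _ heq.symm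
  · exfalso
    rw [arc_end D h] at heq
    rcases cases01 t ht with rfl | rfl | ht'
    · rw [D.arc_start _ _ h'] at heq; exact hvx (D.pos_inj heq)
    · rw [arc_end D h'] at heq; exact hvy (D.pos_inj heq)
    · exact D.arc_avoid _ _ h' _ ht' _ heq.symm
  · rcases cases01 t ht with rfl | rfl | ht'
    · rw [D.arc_start _ _ h'] at heq; exact (D.arc_avoid _ _ h _ hs' _ heq).elim
    · rw [arc_end D h'] at heq; exact (D.arc_avoid _ _ h _ hs' _ heq).elim
    · exact ⟨_, ⟨s, hs', rfl⟩, ⟨t, ht', heq.symm⟩⟩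

/-- A drawn `K_{3,3}` has a crossing of two independent edges. -/
lemma k33_cross (D : ICDrawing G) (A B : Fin 3 → V) (hA : Function.Injective A)
    (hB : Function.Injective B) (hAB : ∀ i j, G.Adj (A i) (B j)) :
    ∃ i i' j j', i ≠ i' ∧ j ≠ j' ∧
      (D.arc (A i) (B j) '' Ioo 0 1 ∩ D.arc (A i') (B j') '' Ioo 0 1).Nonempty := by
  by_contra! hcon
  let φ := Complex.equivRealProdCLM.symm
  have cl : ∀ t : ℝ, max 0 (min 1 t) ∈ Icc (0:ℝ) 1 := fun t => by simp
  refine k33 (fun i => φ (D.pos (A i))) (fun j => φ (D.pos (B j)))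
    (fun i j t => φ (D.arc (A i) (B j) (max 0 (min 1 t)))) ?_ ?_ ?_ ?_
  · intro i j
    exact φ.continuous.comp ((D.arc_cont _ _ (hAB i j)).comp_continuous (by fun_prop) cl)
  · intro i j
    simp [D.arc_start _ _ (hAB i j)]
  · intro i j
    simp [arc_end D (hAB i j)]
  · intro i i' j j' hi hj s t h
    have h := φ.injective h
    have := cross_of_eq D (hAB i j) (hAB i' j') (hA.ne hi) (hAB i j').ne (hAB i' j).ne'
      (hB.ne hj) (cl s) (cl t) h
    exact this.ne_empty (hcon i i' j j' hi hj)

theorem no_k6 (D : ICDrawing G) (f : Fin 6 → V) (hf : ∀ i j, i ≠ j → G.Adj (f i) (f j)) :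
    False := by
  have hinj : Function.Injective f := fun i j h => by
    by_contra hij
    exact (hf i j hij).ne h
  -- a first crossing
  obtain ⟨a, b, c, d, hab, hac, had, hbc, hbd, hcd, hcr⟩ : ∃ a b c d : Fin 6, a ≠ b ∧ a ≠ c ∧
      a ≠ d ∧ b ≠ c ∧ b ≠ d ∧ c ≠ d ∧
      (D.arc (f a) (f b) '' Ioo 0 1 ∩ D.arc (f c) (f d) '' Ioo 0 1).Nonempty := by
    have n1 : ∀ i j : Fin 3, (![0, 1, 2] : Fin 3 → Fin 6) i ≠ (![3, 4, 5] : Fin 3 → Fin 6) j := by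
      decide
    have iA : Function.Injective (![0, 1, 2] : Fin 3 → Fin 6) := by decide
    have iB : Function.Injective (![3, 4, 5] : Fin 3 → Fin 6) := by decide
    obtain ⟨i, i', j, j', hi, hj, h⟩ := k33_cross D (fun i => f ((![0, 1, 2] : Fin 3 → Fin 6) i))
      (fun i => f ((![3, 4, 5] : Fin 3 → Fin 6) i)) (hinj.comp iA) (hinj.comp iB)
      (fun i j => hf _ _ (n1 i j))
    exact ⟨_, _, _, _, n1 i j, iA.ne hi, n1 i j', (n1 i' j).symm, iB.ne hj, n1 i' j', h⟩
  -- the two remaining vertices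
  obtain ⟨r, q, hrq, hset⟩ : ∃ r q : Fin 6, r ≠ q ∧ ({a, b, c, d} : Finset (Fin 6))ᶜ = {r, q} := by
    apply Finset.card_eq_two.1
    rw [Finset.card_compl, Finset.card_eq_of_equiv_fin (n := 4)]
    · rfl
    · exact Finset.equivFinOfCardEq (by
        rw [Finset.card_insert_of_notMem, Finset.card_insert_of_notMem, Finset.card_pair hcd] <;>
        simp [*])
  have hr : r ∈ ({a, b, c, d} : Finset (Fin 6))ᶜ := by rw [hset]; simp
  have hq : q ∈ ({a, b, c, d} : Finset (Fin 6))ᶜ := by rw [hset]; simp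
  simp only [Finset.mem_compl, Finset.mem_insert, Finset.mem_singleton, not_or] at hr hq
  obtain ⟨hra, hrb, hrc, hrd⟩ := hr
  obtain ⟨hqa, hqb, hqc, hqd⟩ := hq
  have n1 : ∀ i j : Fin 3, (![a, b, r] : Fin 3 → Fin 6) i ≠ (![c, d, q] : Fin 3 → Fin 6) j := by
    intro i j; fin_cases i <;> fin_cases j <;> simp <;> grind
  have iA : Function.Injective (![a, b, r] : Fin 3 → Fin 6) := by
    intro i j; fin_cases i <;> fin_cases j <;> simp <;> grind
  have iB : Function.Injective (![c, d, q] : Fin 3 → Fin 6) := by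
    intro i j; fin_cases i <;> fin_cases j <;> simp <;> grind
  obtain ⟨i, i', j, j', hi, hj, h⟩ := k33_cross D (fun i => f ((![a, b, r] : Fin 3 → Fin 6) i))
    (fun i => f ((![c, d, q] : Fin 3 → Fin 6) i)) (hinj.comp iA) (hinj.comp iB)
    (fun i j => hf _ _ (n1 i j))
  have hne : ∀ k l : Fin 3, s(f a, f b) ≠
      s(f ((![a, b, r] : Fin 3 → Fin 6) k), f ((![c, d, q] : Fin 3 → Fin 6) l)) := by
    intro k l hk
    rw [Sym2.eq_iff] at hk
    rcases hk with ⟨-, h2⟩ | ⟨h1, -⟩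
    · exact n1 1 l (hinj h2)
    · exact n1 0 l (hinj h1)
  have hdis := D.ic _ _ _ _ _ _ _ _ (hf a b hab) (hf c d hcd) (hf _ _ (n1 i j))
    (hf _ _ (n1 i' j'))
    (by
      intro hk
      rw [Sym2.eq_iff] at hk
      rcases hk with ⟨h1, -⟩ | ⟨h1, -⟩
      · exact hac (hinj h1)
      · exact had (hinj h1))
    (by
      intro hk
      rw [Sym2.eq_iff] at hk
      rcases hk with ⟨h1, -⟩ | ⟨h1, -⟩
      · exact hi (iA (hinj h1))
      · exact n1 i j' (hinj h1)) hcr h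
    (by
      intro hk
      have : s(f a, f b) ∈ ({s(f a, f b), s(f c, f d)} : Set (Sym2 V)) := by simp
      rw [hk] at this
      rcases this with h1 | h1
      · exact hne _ _ h1
      · exact hne _ _ h1)
  have h01 : i = 0 ∨ i = 1 ∨ i' = 0 ∨ i' = 1 := by
    clear * - hi
    revert i i'; decide
  have hmem : ∀ x, x ∈ ({f a, f b, f c, f d} : Set V) →
      x ∉ ({f ((![a, b, r] : Fin 3 → Fin 6) i), f ((![c, d, q] : Fin 3 → Fin 6) j),
        f ((![a, b, r] : Fin 3 → Fin 6) i'), f ((![c, d, q] : Fin 3 → Fin 6) j')} : Set V) := by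
    intro x h1 h2
    have : x ∈ (∅ : Set V) := hdis ▸ ⟨h1, h2⟩
    exact this
  rcases h01 with rfl | rfl | rfl | rfl
  · exact hmem (f a) (by simp) (by simp)
  · exact hmem (f b) (by simp) (by simp)
  · exact hmem (f a) (by simp) (by simp)
  · exact hmem (f b) (by simp) (by simp)

end graph

end K6IC

/-- $K_6$ is not IC-planar; hence in any IC-plane graph, every vertex with at least 5
pairwise adjacent neighbors would induce a $K_6$, which is impossible, so every vertex
with at least 5 neighbors in a set $S$ has two nonadjacent neighbors in $S$. -/
theorem k6_not_ic_planar_and_nonadjacent_neighbors :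
    ¬ (⊤ : SimpleGraph (Fin 6)).ICPlanar ∧
    ∀ {V : Type} [DecidableEq V] (G : SimpleGraph V), G.ICPlanar →
      ∀ (z : V) (S : Finset V) [DecidableRel G.Adj],
        5 ≤ (S.filter (fun a => G.Adj z a)).card →
        ∃ a ∈ S, ∃ b ∈ S, G.Adj z a ∧ G.Adj z b ∧ a ≠ b ∧ ¬ G.Adj a b := by
  refine ⟨fun ⟨D⟩ => K6IC.no_k6 D id (fun i j h => h), ?_⟩
  rintro V _ G ⟨D⟩ z S _ hcard
  by_contra! hcon
  obtain ⟨T, hT, hT5⟩ := Finset.exists_subset_card_eq hcard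
  let g : Fin 5 ≃ T := (Finset.equivFinOfCardEq hT5).symm
  have hg : ∀ i, (g i : V) ∈ S ∧ G.Adj z (g i) := fun i => by
    simpa using hT (g i).2
  refine K6IC.no_k6 D (Fin.cons z (fun i => (g i : V))) ?_
  intro i j hij
  induction i using Fin.cases with
  | zero =>
    induction j using Fin.cases with
    | zero => exact (hij rfl).elim
    | succ j => simpa using (hg j).2
  | succ i =>
    induction j using Fin.cases with
    | zero => simpa using (hg i).2.symm
    | succ j =>
      simp only [Fin.cons_succ]
      refine hcon _ (hg i).1 _ (hg j).1 (hg i).2 (hg j).2 ?_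
      intro h
      exact hij (congrArg Fin.succ (g.injective (Subtype.ext h)))
end
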